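/- arXiv:2407.10697 — 2 statements merged into one kernel-verified Lean document; each statement's English description precedes it below -/
import Mathlib

section
/- Fix angles 0 < θ < θ' ≤ π/2 and n ≥ 3. Let g:[−1,1]→ℝ satisfy the Delsarte linear programming conditions for M(n−1,θ'), and let F:[−1,1]→ℝ be bounded measurable with ∫_{−1}^1 F(t)(1−t²)^{(n−3)/2}dt ≠ 0. For z ∈ S^{n−1} let Π_z(w) := (w−⟨w,z⟩z)/|w−⟨w,z⟩z|, and suppose the function H(x,y) := ∫_{S^{n−1}} F(⟨x,z⟩)F(⟨y,z⟩)·g(⟨Π_z(x),Π_z(y)⟩) dz (integration with respect to the rotation-invariant probability measure on S^{n−1}; H depends only on t = ⟨x,y⟩) satisfies H(t) ≤ 0 for all t ∈ [−1, cos θ]. Then M(n,θ) ≤ [g(1)·∫_{−1}^1(1−t²)^{(n−4)/2}dt / ∫_{−1}^1 g(t)(1−t²)^{(n−4)/2}dt] · [∫_{−1}^1 F(t)²(1−t²)^{(n−3)/2}dt · ∫_{−1}^1(1−t²)^{(n−3)/2}dt / (∫_{−1}^1 F(t)(1−t²)^{(n−3)/2}dt)²]. -/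
open MeasureTheory Filter Real
open scoped RealInnerProductSpace

noncomputable section

/-- `g` is positive semi-definite on the unit sphere `S^{N-1} ⊂ ℝ^N`. -/
def PosSemidefOnSphere (N : ℕ) (g : ℝ → ℝ) : Prop :=
  ∀ (M : ℕ) (w : Fin M → EuclideanSpace ℝ (Fin N)) (c : Fin M → ℝ),
    (∀ i, ‖w i‖ = 1) → 0 ≤ ∑ i, ∑ j, c i * c j * g ⟪w i, w j⟫

/-- `g` satisfies the Delsarte linear programming conditions for `M(N, θ)`. -/
def DelsarteLP (N : ℕ) (θ : ℝ) (g : ℝ → ℝ) : Prop :=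
  PosSemidefOnSphere N g ∧ (∀ t ∈ Set.Icc (-1 : ℝ) (Real.cos θ), g t ≤ 0) ∧
    0 < ∫ t in (-1 : ℝ)..1, g t * (1 - t ^ 2) ^ (((N : ℝ) - 3) / 2)

/-- The maximal size `M(n, θ)` of a `θ`-spherical code in `S^{n-1}`. -/
def Mcode (n : ℕ) (θ : ℝ) : ℕ :=
  sSup {N : ℕ | ∃ A : Finset (EuclideanSpace ℝ (Fin n)), A.card = N ∧
    (∀ x ∈ A, ‖x‖ = 1) ∧ ∀ x ∈ A, ∀ y ∈ A, x ≠ y → ⟪x, y⟫ ≤ Real.cos θ}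

/-- Normalized projection `Π_z(w)` of `w` onto the orthogonal complement of `z`. -/
def projZ {n : ℕ} (z w : EuclideanSpace ℝ (Fin n)) : EuclideanSpace ℝ (Fin n) :=
  ‖w - ⟪w, z⟫ • z‖⁻¹ • (w - ⟪w, z⟫ • z)

/-- `σ` is the rotation-invariant probability measure on `S^{n-1}`. -/
def IsInvProbSphere (n : ℕ)
    (σ : Measure (Metric.sphere (0 : EuclideanSpace ℝ (Fin n)) 1)) : Prop :=
  IsProbabilityMeasure σ ∧
    ∀ A : EuclideanSpace ℝ (Fin n) ≃ₗᵢ[ℝ] EuclideanSpace ℝ (Fin n),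
      Measure.map (fun z : Metric.sphere (0 : EuclideanSpace ℝ (Fin n)) 1 =>
        (⟨A z.1, by
          rw [Metric.mem_sphere, dist_zero_right, A.norm_map, ← dist_zero_right]
          exact z.2⟩ : Metric.sphere (0 : EuclideanSpace ℝ (Fin n)) 1)) σ = σ

/-!
Projecting the points of a code to the equator of `z` gives configurations on `S^{n-2}`, so for
each `z` the kernel `F ⟪x, z⟫ F ⟪y, z⟫ g ⟪Π_z x, Π_z y⟫` is positive semi-definite. Averaging over
`z` yields a kernel `H` on `S^{n-1}` to which Delsarte's argument applies: the double sum of `H`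
over a code of size `M` is at most its diagonal `M g(1) E[F²]`. For the lower bound, a positive
semi-definite `g` stays so after its mean `g₀` is subtracted (add many independent random points
to a configuration), hence the double sum is at least `g₀ E[(∑ᵢ F ⟪xᵢ, z⟫)²] ≥ g₀ (M E[F])²`.

The expectations become one-dimensional integrals because a coordinate of a uniform point of the
sphere has the Gegenbauer density, which is recovered from its moments. As `g` is only measurable
up to null sets, the averaged kernel makes sense only if the map `z ↦ ⟪Π_z x, Π_z y⟫` pulls null
sets back to null sets. By Fubini it suffices to see this along the orbit of almost every `z` under
a one-parameter family of reflections fixing `x`, where the map is analytic and not constant.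
-/
open scoped Topology
open ProbabilityTheory

theorem measure_inter_preimage_eq_zero_of_hasStrictDerivAt {f f' : ℝ → ℝ} {s B : Set ℝ}
    (hf : ∀ x ∈ s, HasStrictDerivAt f (f' x) x) (hf' : ∀ x ∈ s, f' x ≠ 0) (hB : volume B = 0) :
    volume (s ∩ f ⁻¹' B) = 0 := by
  refine measure_null_of_locally_null _ fun x hx => ?_
  have hd := hf x hx.1
  have hinv := hd.to_localInverse (hf' x hx.1)
  obtain ⟨K, t, ht, hK⟩ := hinv.hasStrictFDerivAt.exists_lipschitzOnWith
  have hleft := (hd.hasStrictFDerivAt_equiv (hf' x hx.1)).eventually_left_inverse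
  refine ⟨(s ∩ f ⁻¹' B) ∩ {y | f y ∈ t ∧ hd.localInverse f _ x (hf' x hx.1) (f y) = y},
    inter_mem self_mem_nhdsWithin
      (nhdsWithin_le_nhds ((hd.hasDerivAt.continuousAt.eventually_mem ht).and hleft)), ?_⟩
  have himage := (hK.mono (Set.inter_subset_right (s := B))).hausdorffMeasure_image_le zero_le_one
  rw [hausdorffMeasure_real, measure_mono_null Set.inter_subset_left hB, mul_zero] at himage
  refine measure_mono_null ?_ (nonpos_iff_eq_zero.mp himage)
  rintro y ⟨⟨-, hyB⟩, hyt, hy⟩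
  exact ⟨f y, ⟨hyB, hyt⟩, hy⟩

theorem quasiMeasurePreserving_of_analytic {f : ℝ → ℝ} (hf : AnalyticOnNhd ℝ f Set.univ)
    {a b : ℝ} (hab : f a ≠ f b) : Measure.QuasiMeasurePreserving f := by
  have hdiff (x : ℝ) : DifferentiableAt ℝ f x := (hf x trivial).differentiableAt
  have hderiv : ∀ᵐ x, deriv f x ≠ 0 := by
    obtain ⟨x, hx⟩ : ∃ x, deriv f x ≠ 0 := by
      by_contra! h
      exact hab (is_const_of_deriv_eq_zero hdiff h a b)
    have hcodiscrete := hf.deriv.preimage_zero_mem_codiscrete hx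
    rw [← Measure.restrict_univ (μ := volume)]
    exact ae_restrict_le_codiscreteWithin MeasurableSet.univ hcodiscrete
  have hmeas : Measurable f := (Differentiable.continuous hdiff).measurable
  refine ⟨hmeas, Measure.AbsolutelyContinuous.mk fun B hB hB0 => ?_⟩
  rw [Measure.map_apply hmeas hB]
  have hnull := measure_inter_preimage_eq_zero_of_hasStrictDerivAt (s := {x | deriv f x ≠ 0})
    (fun x _ => (hf x trivial).hasStrictDerivAt) (fun _ => id) hB0
  exact (Measure.measure_inter_eq_of_ae (t := {x | deriv f x ≠ 0}) hderiv).symm.trans hnull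

theorem measure_ext_of_moments {μ ν : Measure ℝ} [IsFiniteMeasure μ] [IsFiniteMeasure ν]
    (hμ : 0 ∈ interior (integrableExpSet id μ))
    (hν : 0 ∈ interior (integrableExpSet id ν))
    (h : ∀ k : ℕ, ∫ t, t ^ k ∂μ = ∫ t, t ^ k ∂ν) : μ = ν := by
  set U : Set ℂ := Complex.re ⁻¹'
    (interior (integrableExpSet id μ) ∩ interior (integrableExpSet id ν))
  have hU : IsPreconnected U :=
    ((convex_integrableExpSet.interior.inter convex_integrableExpSet.interior).is_linear_preimage
      Complex.reLm.isLinear).isPreconnected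
  have h0 : (0 : ℂ) ∈ U := ⟨hμ, hν⟩
  have haμ : AnalyticOnNhd ℂ (complexMGF id μ) U := analyticOnNhd_complexMGF.mono fun _ hz => hz.1
  have haν : AnalyticOnNhd ℂ (complexMGF id ν) U := analyticOnNhd_complexMGF.mono fun _ hz => hz.2
  have hiter (k : ℕ) :
      iteratedDeriv k (complexMGF id μ) 0 = iteratedDeriv k (complexMGF id ν) 0 := by
    rw [iteratedDeriv_complexMGF hμ, iteratedDeriv_complexMGF hν]
    simpa [← Complex.ofReal_pow, integral_complex_ofReal] using h k
  have hnhds : complexMGF id μ =ᶠ[𝓝 0] complexMGF id ν := by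
    have hμseries := (haμ 0 h0).hasFPowerSeriesAt
    simp_rw [hiter] at hμseries
    filter_upwards [hμseries.eventually_hasSum_sub,
      (haν 0 h0).hasFPowerSeriesAt.eventually_hasSum_sub] with z hz hz'
    exact hz.unique hz'
  refine Measure.ext_of_charFun (funext fun t => ?_)
  rw [← complexMGF_id_mul_I, ← complexMGF_id_mul_I]
  exact haμ.eqOn_of_preconnected_of_eventuallyEq haν hU h0 hnhds (by simpa [U] using ⟨hμ, hν⟩)

theorem zero_mem_interior_integrableExpSet {μ : Measure ℝ} [IsFiniteMeasure μ] {a b : ℝ}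
    (h : ∀ᵐ t ∂μ, t ∈ Set.Icc a b) : 0 ∈ interior (integrableExpSet id μ) := by
  have huniv : integrableExpSet id μ = Set.univ :=
    Set.eq_univ_of_forall fun _ => integrable_exp_mul_of_mem_Icc aemeasurable_id h
  simp [huniv]

/-- The Gegenbauer weight of `S^{n-1}`, the density up to normalization of a coordinate of a
uniformly distributed point. -/
def gegenbauerWeight (n : ℕ) (t : ℝ) : ℝ := (1 - t ^ 2) ^ (((n : ℝ) - 3) / 2)

/-- The measure on `(-1, 1)` with density `gegenbauerWeight n`. It is not normalized; averages
with respect to it are written with `⨍`. -/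
def gegenbauerMeasure (n : ℕ) : Measure ℝ :=
  (volume.restrict (Set.Ioo (-1) 1)).withDensity fun t => ENNReal.ofReal (gegenbauerWeight n t)

theorem gegenbauerWeight_pos (n : ℕ) {t : ℝ} (ht : t ∈ Set.Ioo (-1 : ℝ) 1) :
    0 < gegenbauerWeight n t :=
  Real.rpow_pos_of_pos (by nlinarith [ht.1, ht.2]) _

theorem measurable_gegenbauerWeight (n : ℕ) : Measurable (gegenbauerWeight n) := by
  unfold gegenbauerWeight
  fun_prop

theorem integrableOn_gegenbauerWeight {n : ℕ} (hn : 2 ≤ n) :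
    IntegrableOn (gegenbauerWeight n) (Set.Ioo (-1) 1) := by
  have harcsin : IntegrableOn (fun t : ℝ => 1 / √(1 - t ^ 2)) (Set.Ioc (-1) 1) :=
    intervalIntegral.integrableOn_deriv_of_nonneg Real.continuous_arcsin.continuousOn
      (fun t ht => Real.hasDerivAt_arcsin ht.1.ne' ht.2.ne) (fun t _ => by positivity)
  refine (harcsin.mono_set Set.Ioo_subset_Ioc_self).mono'
    (measurable_gegenbauerWeight n).aestronglyMeasurable ?_
  filter_upwards [ae_restrict_mem measurableSet_Ioo] with t ht
  have h0 : 0 < 1 - t ^ 2 := by nlinarith [ht.1, ht.2]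
  have hn' : (2 : ℝ) ≤ n := by exact_mod_cast hn
  rw [Real.norm_of_nonneg (gegenbauerWeight_pos n ht).le, Real.sqrt_eq_rpow, one_div,
    ← Real.rpow_neg h0.le]
  exact Real.rpow_le_rpow_of_exponent_ge h0 (by nlinarith) (by linarith)

theorem integral_gegenbauerMeasure (n : ℕ) (f : ℝ → ℝ) :
    ∫ t, f t ∂gegenbauerMeasure n = ∫ t in (-1 : ℝ)..1, f t * gegenbauerWeight n t := by
  rw [gegenbauerMeasure, integral_withDensity_eq_integral_toReal_smul
    (measurable_gegenbauerWeight n).ennreal_ofReal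
    (Eventually.of_forall fun _ => ENNReal.ofReal_lt_top),
    intervalIntegral.integral_of_le (by norm_num), integral_Ioc_eq_integral_Ioo]
  refine setIntegral_congr_fun measurableSet_Ioo fun t ht => ?_
  simp only [smul_eq_mul]
  rw [ENNReal.toReal_ofReal (gegenbauerWeight_pos n ht).le, mul_comm]

theorem average_gegenbauerMeasure (n : ℕ) (f : ℝ → ℝ) :
    ⨍ t, f t ∂gegenbauerMeasure n =
      (∫ t in (-1 : ℝ)..1, f t * gegenbauerWeight n t) /
        ∫ t in (-1 : ℝ)..1, gegenbauerWeight n t := by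
  have hmass := integral_gegenbauerMeasure n fun _ => 1
  simp only [integral_const, smul_eq_mul, mul_one, one_mul] at hmass
  rw [average_eq, integral_gegenbauerMeasure, hmass, smul_eq_mul, inv_mul_eq_div]

theorem isFiniteMeasure_gegenbauerMeasure {n : ℕ} (hn : 2 ≤ n) :
    IsFiniteMeasure (gegenbauerMeasure n) :=
  isFiniteMeasure_withDensity_ofReal (integrableOn_gegenbauerWeight hn).2

theorem gegenbauerMeasure_absolutelyContinuous (n : ℕ) :
    gegenbauerMeasure n ≪ volume.restrict (Set.Ioo (-1) 1) :=
  withDensity_absolutelyContinuous _ _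

theorem absolutelyContinuous_gegenbauerMeasure (n : ℕ) :
    volume.restrict (Set.Ioo (-1) 1) ≪ gegenbauerMeasure n := by
  refine withDensity_absolutelyContinuous'
    (measurable_gegenbauerWeight n).ennreal_ofReal.aemeasurable ?_
  filter_upwards [ae_restrict_mem measurableSet_Ioo] with t ht
  simpa using gegenbauerWeight_pos n ht

theorem ae_mem_Ioo_gegenbauerMeasure (n : ℕ) : ∀ᵐ t ∂gegenbauerMeasure n, t ∈ Set.Ioo (-1) 1 :=
  (gegenbauerMeasure_absolutelyContinuous n).ae_le (ae_restrict_mem measurableSet_Ioo)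

instance gegenbauerMeasure.neZero (n : ℕ) : NeZero (gegenbauerMeasure n) := by
  refine ⟨fun h => ?_⟩
  have hac := absolutelyContinuous_gegenbauerMeasure n
  rw [h, Measure.absolutelyContinuous_zero_iff, Measure.restrict_eq_zero] at hac
  norm_num at hac

theorem integral_gegenbauerWeight_pos {n : ℕ} (hn : 2 ≤ n) :
    0 < ∫ t in (-1 : ℝ)..1, gegenbauerWeight n t :=
  intervalIntegral.intervalIntegral_pos_of_pos_on
    ((intervalIntegrable_iff_integrableOn_Ioo_of_le (by norm_num)).mpr
      (integrableOn_gegenbauerWeight hn)) (fun _ => gegenbauerWeight_pos n) (by norm_num)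

theorem intervalIntegrable_pow_mul_gegenbauerWeight {n : ℕ} (hn : 2 ≤ n) (k : ℕ) :
    IntervalIntegrable (fun t => t ^ k * gegenbauerWeight n t) volume (-1) 1 :=
  ((intervalIntegrable_iff_integrableOn_Ioo_of_le (by norm_num)).mpr
    (integrableOn_gegenbauerWeight hn)).continuousOn_mul (by fun_prop)

theorem hasDerivAt_pow_mul_gegenbauerWeight {n : ℕ} (hn : 2 ≤ n) (k : ℕ) {t : ℝ}
    (ht : t ∈ Set.Ioo (-1 : ℝ) 1) :
    HasDerivAt (fun t => t ^ (k + 1) * (1 - t ^ 2) ^ (((n : ℝ) - 1) / 2))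
      ((k + 1) * (t ^ k * gegenbauerWeight n t)
        - (k + n) * (t ^ (k + 2) * gegenbauerWeight n t)) t := by
  have hn' : (2 : ℝ) ≤ n := by exact_mod_cast hn
  have h0 : 0 < 1 - t ^ 2 := by nlinarith [ht.1, ht.2]
  have hbase : HasDerivAt (fun t : ℝ => 1 - t ^ 2) (-(2 * t)) t := by
    simpa using (hasDerivAt_pow 2 t).const_sub 1
  have hexp : ((n : ℝ) - 1) / 2 = 1 + (((n : ℝ) - 3) / 2) := by ring
  have hweight : (1 - t ^ 2) ^ (((n : ℝ) - 1) / 2) = (1 - t ^ 2) * gegenbauerWeight n t := by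
    rw [hexp, Real.rpow_one_add' h0.le (by linarith), gegenbauerWeight]
  refine ((hasDerivAt_pow (k + 1) t).mul
    (hbase.rpow_const (p := ((n : ℝ) - 1) / 2) (Or.inl h0.ne'))).congr_deriv ?_
  rw [hweight, show ((n : ℝ) - 1) / 2 - 1 = ((n : ℝ) - 3) / 2 by ring, ← gegenbauerWeight]
  push_cast
  ring

theorem integral_pow_add_two_gegenbauerMeasure {n : ℕ} (hn : 2 ≤ n) (k : ℕ) :
    (k + n) * ∫ t, t ^ (k + 2) ∂gegenbauerMeasure n
      = (k + 1) * ∫ t, t ^ k ∂gegenbauerMeasure n := by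
  have hn' : (2 : ℝ) ≤ n := by exact_mod_cast hn
  have hint (j : ℕ) (c : ℝ) := (intervalIntegrable_pow_mul_gegenbauerWeight hn j).const_mul c
  have hFTC := intervalIntegral.integral_eq_sub_of_hasDerivAt_of_le (by norm_num)
    (ContinuousOn.mul (by fun_prop)
      (ContinuousOn.rpow_const (by fun_prop) fun t _ => Or.inr (by linarith)))
    (fun t ht => hasDerivAt_pow_mul_gegenbauerWeight hn k ht) ((hint k _).sub (hint (k + 2) _))
  rw [intervalIntegral.integral_sub (hint _ _) (hint _ _), intervalIntegral.integral_const_mul,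
    intervalIntegral.integral_const_mul] at hFTC
  have hzero : (0 : ℝ) ^ (((n : ℝ) - 1) / 2) = 0 := Real.zero_rpow (by linarith)
  norm_num [hzero] at hFTC
  rw [integral_gegenbauerMeasure, integral_gegenbauerMeasure]
  linarith

theorem integral_odd_pow_gegenbauerMeasure (n : ℕ) {k : ℕ} (hk : Odd k) :
    ∫ t, t ^ k ∂gegenbauerMeasure n = 0 := by
  have h := intervalIntegral.integral_comp_neg (a := -1) (b := 1)
    (fun t => t ^ k * gegenbauerWeight n t)
  simp only [gegenbauerWeight, hk.neg_pow, even_two, Even.neg_pow, neg_mul, neg_neg,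
    intervalIntegral.integral_neg] at h
  rw [integral_gegenbauerMeasure]
  exact self_eq_neg.mp h.symm

section UniformOnSphere

variable {E : Type*} [NormedAddCommGroup E] [InnerProductSpace ℝ E] [MeasurableSpace E]

/-- `ν` is the rotation-invariant probability measure on the unit sphere of `E`, regarded as a
measure on `E` so that the linear structure of the ambient space is available. -/
structure IsUniformOnSphere (ν : Measure E) : Prop where
  isProbabilityMeasure : IsProbabilityMeasure ν
  ae_norm_eq_one : ∀ᵐ z ∂ν, ‖z‖ = 1
  map_eq : ∀ A : E ≃ₗᵢ[ℝ] E, ν.map A = ν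

variable [BorelSpace E]

namespace IsUniformOnSphere

variable {ν : Measure E} (h : IsUniformOnSphere ν)
include h

theorem measurePreserving (A : E ≃ₗᵢ[ℝ] E) : MeasurePreserving A ν ν :=
  ⟨A.continuous.measurable, h.map_eq A⟩

theorem integral_comp (A : E ≃ₗᵢ[ℝ] E) (f : E → ℝ) : ∫ z, f (A z) ∂ν = ∫ z, f z ∂ν :=
  (h.measurePreserving A).integral_comp A.toHomeomorph.measurableEmbedding f

omit [BorelSpace E] in
theorem ae_abs_inner_le (u : E) : ∀ᵐ z ∂ν, |⟪u, z⟫| ≤ ‖u‖ := by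
  filter_upwards [h.ae_norm_eq_one] with z hz
  simpa [hz] using abs_real_inner_le_norm u z

theorem integrable_inner_pow_mul_inner_pow (u w : E) (j k : ℕ) :
    Integrable (fun z => ⟪u, z⟫ ^ j * ⟪w, z⟫ ^ k) ν := by
  have := h.isProbabilityMeasure
  refine Integrable.of_bound (C := ‖u‖ ^ j * ‖w‖ ^ k) (by fun_prop) ?_
  filter_upwards [h.ae_abs_inner_le u, h.ae_abs_inner_le w] with z hu hw
  simp only [norm_mul, norm_pow, Real.norm_eq_abs]
  gcongr

theorem integral_inner_pow {u : E} (hu : ‖u‖ = 1) (v : E) (k : ℕ) :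
    ∫ z, ⟪v, z⟫ ^ k ∂ν = ‖v‖ ^ k * ∫ z, ⟪u, z⟫ ^ k ∂ν := by
  let A : E ≃ₗᵢ[ℝ] E := (ℝ ∙ (‖v‖ • u - v))ᗮ.reflection
  have hA : A (‖v‖ • u) = v := Submodule.reflection_sub (by simp [norm_smul, hu])
  rw [← h.integral_comp A, ← integral_const_mul]
  refine integral_congr_ae (.of_forall fun z => ?_)
  change ⟪v, A z⟫ ^ k = ‖v‖ ^ k * ⟪u, z⟫ ^ k
  rw [← mul_pow, ← real_inner_smul_left, ← A.inner_map_map (‖v‖ • u), hA]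

theorem integral_odd_inner_pow (u : E) {k : ℕ} (hk : Odd k) : ∫ z, ⟪u, z⟫ ^ k ∂ν = 0 := by
  have hneg := h.integral_comp (LinearIsometryEquiv.neg ℝ) fun z => ⟪u, z⟫ ^ k
  simp only [LinearIsometryEquiv.coe_neg, inner_neg_right, hk.neg_pow, integral_neg] at hneg
  exact neg_eq_self.mp hneg

theorem integral_inner_add_smul_pow (u w : E) (s : ℝ) (k : ℕ) :
    ∫ z, ⟪u + s • w, z⟫ ^ k ∂ν =
      ∑ i ∈ Finset.range (k + 1), k.choose i * (∫ z, ⟪w, z⟫ ^ i * ⟪u, z⟫ ^ (k - i) ∂ν) * s ^ i := by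
  have hexpand (z : E) : ⟪u + s • w, z⟫ ^ k =
      ∑ i ∈ Finset.range (k + 1), k.choose i * s ^ i * (⟪w, z⟫ ^ i * ⟪u, z⟫ ^ (k - i)) := by
    rw [inner_add_left, real_inner_smul_left, add_comm, add_pow]
    exact Finset.sum_congr rfl fun i _ => by ring
  simp_rw [hexpand]
  rw [integral_finsetSum _ fun i _ => (h.integrable_inner_pow_mul_inner_pow w u i _).const_mul _]
  exact Finset.sum_congr rfl fun i _ => by rw [integral_const_mul]; ring

open Polynomial in
theorem integral_inner_pow_mul_inner_sq {u w : E} (hu : ‖u‖ = 1) (hw : ‖w‖ = 1)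
    (huw : ⟪u, w⟫ = 0) (j : ℕ) :
    (2 * j + 1) * ∫ z, ⟪w, z⟫ ^ 2 * ⟪u, z⟫ ^ (2 * j) ∂ν = ∫ z, ⟪u, z⟫ ^ (2 * j + 2) ∂ν := by
  -- Both sides of `∫ ⟪u + s • w, z⟫ ^ (2 * j + 2) = ‖u + s • w‖ ^ (2 * j + 2) * M` are
  -- polynomials in `s`; the claim compares their coefficients of `s ^ 2`.
  set M := ∫ z, ⟪u, z⟫ ^ (2 * j + 2) ∂ν
  have hnorm (s : ℝ) : ‖u + s • w‖ ^ (2 * j + 2) = (1 + s ^ 2) ^ (j + 1) := by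
    have hsq : ‖u + s • w‖ ^ 2 = 1 + s ^ 2 := by
      rw [norm_add_sq_real, inner_smul_right, huw, norm_smul, hu, hw]
      simp
    rw [← hsq, ← pow_mul, mul_add, mul_one]
  have hpoly : ∑ i ∈ Finset.range (2 * j + 3), monomial i ((2 * j + 2).choose i *
      ∫ z, ⟪w, z⟫ ^ i * ⟪u, z⟫ ^ (2 * j + 2 - i) ∂ν) = C M * expand ℝ 2 ((1 + X) ^ (j + 1)) := by
    refine Polynomial.funext fun s => ?_
    have hs := h.integral_inner_pow hu (u + s • w) (2 * j + 2)
    rw [h.integral_inner_add_smul_pow, hnorm] at hs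
    simpa [eval_finsetSum, mul_comm M] using hs
  have hcoeff := congrArg (coeff · 2) hpoly
  simp only [finsetSum_coeff, coeff_monomial, coeff_C_mul, coeff_expand two_pos,
    coeff_one_add_X_pow] at hcoeff
  norm_num [Nat.cast_choose_two] at hcoeff
  have hj : (j : ℝ) + 1 ≠ 0 := by positivity
  refine mul_left_cancel₀ hj ?_
  linear_combination hcoeff

theorem integral_inner_pow_add_two [FiniteDimensional ℝ E] {u : E} (hu : ‖u‖ = 1) (j : ℕ) :
    (2 * j + Module.finrank ℝ E) * ∫ z, ⟪u, z⟫ ^ (2 * j + 2) ∂ν =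
      (2 * j + 1) * ∫ z, ⟪u, z⟫ ^ (2 * j) ∂ν := by
  have : Nontrivial E := ⟨u, 0, by rintro rfl; simp at hu⟩
  let b := stdOrthonormalBasis ℝ E
  let i₀ : Fin (Module.finrank ℝ E) := ⟨0, Module.finrank_pos⟩
  have hb (i) : ‖b i‖ = 1 := b.orthonormal.1 i
  have hindep (k : ℕ) : ∫ z, ⟪u, z⟫ ^ k ∂ν = ∫ z, ⟪b i₀, z⟫ ^ k ∂ν := by
    rw [h.integral_inner_pow (hb i₀) u, hu, one_pow, one_mul]
  have hsum : ∫ z, ⟪b i₀, z⟫ ^ (2 * j) ∂ν =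
      ∑ i, ∫ z, ⟪b i, z⟫ ^ 2 * ⟪b i₀, z⟫ ^ (2 * j) ∂ν := by
    rw [← integral_finsetSum _ fun i _ => h.integrable_inner_pow_mul_inner_pow _ _ _ _]
    refine integral_congr_ae ?_
    filter_upwards [h.ae_norm_eq_one] with z hz
    rw [← Finset.sum_mul, b.sum_sq_inner_right, hz, one_pow, one_mul]
  have hterm : ∀ i ∈ Finset.univ.erase i₀,
      (2 * j + 1) * ∫ z, ⟪b i, z⟫ ^ 2 * ⟪b i₀, z⟫ ^ (2 * j) ∂ν =
        ∫ z, ⟪b i₀, z⟫ ^ (2 * j + 2) ∂ν := fun i hi =>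
    h.integral_inner_pow_mul_inner_sq (hb i₀) (hb i)
      (b.orthonormal.2 (Finset.ne_of_mem_erase hi).symm) j
  rw [hindep, hindep, hsum, Finset.mul_sum, ← Finset.add_sum_erase _ _ (Finset.mem_univ i₀),
    Finset.sum_congr rfl hterm, Finset.sum_const, Finset.card_erase_of_mem (Finset.mem_univ _),
    Finset.card_fin, nsmul_eq_mul, Nat.cast_pred Module.finrank_pos]
  simp_rw [← pow_add, add_comm 2 (2 * j)]
  ring

theorem map_inner_eq [FiniteDimensional ℝ E] {n : ℕ} (hE : Module.finrank ℝ E = n) (hn : 2 ≤ n)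
    {u : E} (hu : ‖u‖ = 1) :
    ν.map (fun z => ⟪u, z⟫) = (gegenbauerMeasure n Set.univ)⁻¹ • gegenbauerMeasure n := by
  have := h.isProbabilityMeasure
  have := isFiniteMeasure_gegenbauerMeasure hn
  have hmeas : Measurable fun z => ⟪u, z⟫ := by fun_prop
  have : IsFiniteMeasure (ν.map fun z => ⟪u, z⟫) := Measure.isFiniteMeasure_map ν _
  have hsphere : ∀ᵐ t ∂ν.map fun z => ⟪u, z⟫, t ∈ Set.Icc (-1) 1 := by
    refine (ae_map_iff hmeas.aemeasurable measurableSet_Icc).mpr ?_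
    filter_upwards [h.ae_abs_inner_le u] with z hz
    exact abs_le.mp (hu ▸ hz)
  have hgegenbauer : ∀ᵐ t ∂(gegenbauerMeasure n Set.univ)⁻¹ • gegenbauerMeasure n,
      t ∈ Set.Icc (-1) 1 :=
    Measure.ae_smul_measure
      ((ae_mem_Ioo_gegenbauerMeasure n).mono fun t ht => Set.Ioo_subset_Icc_self ht) _
  refine measure_ext_of_moments
    (zero_mem_interior_integrableExpSet hsphere) (zero_mem_interior_integrableExpSet hgegenbauer)
    fun k => ?_
  rw [integral_map hmeas.aemeasurable (by fun_prop), ← average]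
  rcases k.even_or_odd' with ⟨j, rfl | rfl⟩
  · induction j with
    | zero => simp
    | succ j ih =>
      have hsphere_rec := hE ▸ h.integral_inner_pow_add_two hu j
      have hgegenbauer_rec := integral_pow_add_two_gegenbauerMeasure hn (2 * j)
      have hcoeff : (2 * j + n : ℝ) ≠ 0 := by positivity
      refine mul_left_cancel₀ hcoeff ?_
      rw [mul_add, mul_one, hsphere_rec, ih, average_eq, average_eq]
      simp only [smul_eq_mul]
      push_cast at hgegenbauer_rec
      linear_combination -((gegenbauerMeasure n).real Set.univ)⁻¹ * hgegenbauer_rec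
  · rw [h.integral_odd_inner_pow u (odd_two_mul_add_one j), average_eq,
      integral_odd_pow_gegenbauerMeasure n (odd_two_mul_add_one j), smul_zero]

theorem integral_comp_inner [FiniteDimensional ℝ E] {n : ℕ} (hE : Module.finrank ℝ E = n)
    (hn : 2 ≤ n) {u : E} (hu : ‖u‖ = 1) {f : ℝ → ℝ}
    (hf : AEStronglyMeasurable f (gegenbauerMeasure n)) :
    ∫ z, f ⟪u, z⟫ ∂ν = ⨍ t, f t ∂gegenbauerMeasure n := by
  rw [average, ← h.map_inner_eq hE hn hu, integral_map (by fun_prop)]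
  exact h.map_inner_eq hE hn hu ▸ hf.smul_measure _

theorem memLp_comp_inner [FiniteDimensional ℝ E] {n : ℕ} (hE : Module.finrank ℝ E = n)
    (hn : 2 ≤ n) {u : E} (hu : ‖u‖ = 1) {f : ℝ → ℝ} {p : ENNReal}
    (hf : MemLp f p (gegenbauerMeasure n)) : MemLp (fun z => f ⟪u, z⟫) p ν := by
  have hmap : MemLp f p (ν.map fun z => ⟪u, z⟫) := h.map_inner_eq hE hn hu ▸
    hf.smul_measure (ENNReal.inv_ne_top.mpr (NeZero.ne _))
  exact hmap.comp_of_map (by fun_prop)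

theorem quasiMeasurePreserving_inner [FiniteDimensional ℝ E] {n : ℕ}
    (hE : Module.finrank ℝ E = n) (hn : 2 ≤ n) {u : E} (hu : ‖u‖ = 1) :
    Measure.QuasiMeasurePreserving (fun z => ⟪u, z⟫) ν (gegenbauerMeasure n) :=
  ⟨by fun_prop, h.map_inner_eq hE hn hu ▸ Measure.smul_absolutelyContinuous⟩

theorem ae_inner_ne [FiniteDimensional ℝ E] (hE : 2 ≤ Module.finrank ℝ E) {u : E}
    (hu : ‖u‖ = 1) (c : ℝ) : ∀ᵐ z ∂ν, ⟪u, z⟫ ≠ c :=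
  (h.quasiMeasurePreserving_inner rfl hE hu).ae
    ((gegenbauerMeasure_absolutelyContinuous _).ae_le (ae_restrict_of_ae (Measure.ae_ne _ c)))

theorem ae_notMem_submodule [FiniteDimensional ℝ E] (hE : 2 ≤ Module.finrank ℝ E)
    {K : Submodule ℝ E} (hK : K ≠ ⊤) : ∀ᵐ z ∂ν, z ∉ K := by
  obtain ⟨v, hvK, hv⟩ := Kᗮ.exists_mem_ne_zero_of_ne_bot
    (mt Submodule.orthogonal_eq_bot_iff.mp hK)
  filter_upwards [h.ae_inner_ne hE (norm_smul_inv_norm (𝕜 := ℝ) hv) 0] with z hz hzK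
  refine hz ?_
  rw [inner_smul_left, Submodule.inner_left_of_mem_orthogonal hzK hvK, mul_zero]

end IsUniformOnSphere

theorem exists_isUniformOnSphere (E : Type*) [NormedAddCommGroup E] [InnerProductSpace ℝ E]
    [FiniteDimensional ℝ E] [MeasurableSpace E] [BorelSpace E] [Nontrivial E] :
    ∃ ν : Measure E, IsUniformOnSphere ν := by
  -- Project the uniform measure on the unit ball radially.
  let ball : Set E := Metric.ball 0 1
  let P : Measure E := cond volume ball
  have : IsProbabilityMeasure P := cond_isProbabilityMeasure_of_finite
    (Metric.measure_ball_pos _ _ one_pos).ne' measure_ball_lt_top.ne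
  have hradial : Measurable fun v : E => ‖v‖⁻¹ • v := by fun_prop
  refine ⟨P.map fun v => ‖v‖⁻¹ • v,
    Measure.isProbabilityMeasure_map hradial.aemeasurable, ?_, fun A => ?_⟩
  · rw [ae_map_iff hradial.aemeasurable (measurableSet_eq_fun (by fun_prop) (by fun_prop))]
    filter_upwards [cond_absolutelyContinuous.ae_le (Measure.ae_ne volume 0)] with v hv
    exact norm_smul_inv_norm (𝕜 := ℝ) hv
  · have hA : Measurable A := A.continuous.measurable
    have hpreimage : A ⁻¹' ball = ball := by
      ext v
      simp [ball]
    have hPA : P.map A = P := by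
      have hball := A.measurePreserving.restrict_preimage (s := ball) measurableSet_ball
      rw [hpreimage] at hball
      simp only [P, ProbabilityTheory.cond, Measure.map_smul, hball.map_eq]
    have hcomm : (A ∘ fun v => ‖v‖⁻¹ • v) = (fun v => ‖v‖⁻¹ • v) ∘ A := by
      ext v
      simp
    rw [Measure.map_map hA hradial, hcomm, ← Measure.map_map hradial hA, hPA]

end UniformOnSphere

theorem IsInvProbSphere.isUniformOnSphere_map {n : ℕ}
    {σ : Measure (Metric.sphere (0 : EuclideanSpace ℝ (Fin n)) 1)} (hσ : IsInvProbSphere n σ) :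
    IsUniformOnSphere (σ.map Subtype.val) := by
  have := hσ.1
  refine ⟨Measure.isProbabilityMeasure_map measurable_subtype_coe.aemeasurable, ?_, fun A => ?_⟩
  · refine (ae_map_iff measurable_subtype_coe.aemeasurable
      (measurableSet_eq_fun (by fun_prop) (by fun_prop))).mpr (.of_forall fun z => ?_)
    exact norm_eq_of_mem_sphere z
  · have hA : Measurable A := A.continuous.measurable
    conv_rhs => rw [← hσ.2 A]
    rw [Measure.map_map hA measurable_subtype_coe, Measure.map_map measurable_subtype_coe]
    · rfl
    · exact (hA.comp measurable_subtype_coe).subtype_mk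

section Kernel

variable {α : Type*} [MeasurableSpace α] {ν : Measure α} [IsProbabilityMeasure ν] {s : Set α}
  {k : α → α → ℝ} {D κ : ℝ} (hs : ∀ᵐ u ∂ν, u ∈ s)
  (hk : ∀ (M : ℕ) (w : Fin M → α) (c : Fin M → ℝ), (∀ i, w i ∈ s) →
    0 ≤ ∑ i, ∑ j, c i * c j * k (w i) (w j))
  (hsymm : ∀ x y, k x y = k y x) (hdiag : ∀ x ∈ s, k x x ≤ D)
  (hint : ∀ x ∈ s, Integrable (k x) ν) (hmean : ∀ x ∈ s, ∫ u, k x u ∂ν = κ)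
include hs hk hsymm hdiag hint hmean

theorem kernel_sum_add_nonneg (d : ℝ) (N : ℕ) :
    ∀ {M : ℕ} (w : Fin M → α) (c : Fin M → ℝ), (∀ i, w i ∈ s) →
      0 ≤ (∑ i, ∑ j, c i * c j * k (w i) (w j)) + 2 * N * d * κ * ∑ i, c i +
        d ^ 2 * (N * D + N * (N - 1) * κ) := by
  -- Add `N` independent random points of weight `d` to the configuration and average.
  induction N with
  | zero => intro M w c hw; simpa using hk M w c hw
  | succ N ih =>
    intro M w c hw
    set Q := ∑ i, ∑ j, c i * c j * k (w i) (w j)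
    have hlin : Integrable (fun u => ∑ i, c i * k (w i) u) ν :=
      integrable_finsetSum _ fun i _ => (hint _ (hw i)).const_mul _
    have hlin_mean : ∫ u, ∑ i, c i * k (w i) u ∂ν = κ * ∑ i, c i := by
      rw [integral_finsetSum _ fun i _ => (hint _ (hw i)).const_mul _, Finset.mul_sum]
      exact Finset.sum_congr rfl fun i _ => by rw [integral_const_mul, hmean _ (hw i), mul_comm]
    have hpoint : ∀ᵐ u ∂ν, 0 ≤ 2 * d * (∑ i, c i * k (w i) u) + (Q +
        2 * N * d * κ * (d + ∑ i, c i) + d ^ 2 * ((N + 1) * D + N * (N - 1) * κ)) := by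
      filter_upwards [hs] with u hu
      have hcons := ih (Fin.cons u w : Fin (M + 1) → α) (Fin.cons d c : Fin (M + 1) → ℝ)
        (Fin.cases hu hw)
      have hcross : ∑ j, d * c j * k u (w j) = d * ∑ i, c i * k (w i) u := by
        rw [Finset.mul_sum]
        exact Finset.sum_congr rfl fun i _ => by rw [hsymm]; ring
      have hcross' : ∑ i, c i * d * k (w i) u = d * ∑ i, c i * k (w i) u := by
        rw [Finset.mul_sum]
        exact Finset.sum_congr rfl fun i _ => by ring
      simp only [Fin.sum_univ_succ, Fin.cons_zero, Fin.cons_succ, Finset.sum_add_distrib,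
        hcross, hcross'] at hcons
      nlinarith [mul_le_mul_of_nonneg_left (hdiag u hu) (sq_nonneg d)]
    have := integral_nonneg_of_ae hpoint
    rw [integral_add (hlin.const_mul _) (integrable_const _), integral_const_mul, hlin_mean,
      integral_const, probReal_univ, one_smul] at this
    push_cast
    linarith

theorem mul_sq_sum_le_kernel_sum {M : ℕ} (w : Fin M → α) (c : Fin M → ℝ) (hw : ∀ i, w i ∈ s) :
    κ * (∑ i, c i) ^ 2 ≤ ∑ i, ∑ j, c i * c j * k (w i) (w j) := by
  set C := ∑ i, c i
  set Q := ∑ i, ∑ j, c i * c j * k (w i) (w j)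
  have hbound : ∀ᶠ N : ℕ in atTop, 0 ≤ Q - κ * C ^ 2 + C ^ 2 * (D - κ) / N := by
    filter_upwards [eventually_ne_atTop 0] with N hN
    convert kernel_sum_add_nonneg hs hk hsymm hdiag hint hmean (-C / N) N w c hw using 1
    field_simp
    ring
  have hlim := (tendsto_const_div_atTop_nhds_zero_nat (C ^ 2 * (D - κ))).const_add (Q - κ * C ^ 2)
  linarith [ge_of_tendsto hlim hbound]

end Kernel

namespace PosSemidefOnSphere

variable {N : ℕ} {g : ℝ → ℝ} (hg : PosSemidefOnSphere N g)
include hg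

theorem abs_le (hN : 2 ≤ N) {t : ℝ} (ht : |t| ≤ 1) : |g t| ≤ g 1 := by
  obtain ⟨ht₁, ht₂⟩ := _root_.abs_le.mp ht
  let b := EuclideanSpace.basisFun (Fin N) ℝ
  let i : Fin N := ⟨0, by lia⟩
  let j : Fin N := ⟨1, by lia⟩
  have hij : ⟪b i, b j⟫ = 0 := b.orthonormal.2 (by simp [i, j])
  let v : EuclideanSpace ℝ (Fin N) := cos (arccos t) • b i + sin (arccos t) • b j
  have hiv : ⟪b i, v⟫ = t := by
    simp [v, inner_add_right, inner_smul_right, hij, cos_arccos ht₁ ht₂]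
  have hv : ‖v‖ = 1 := by
    refine (sq_eq_sq₀ (norm_nonneg v) zero_le_one).mp ?_
    rw [norm_add_sq_real, inner_smul_left, inner_smul_right, hij]
    simp [norm_smul]
  have hquad (c : ℝ) := hg 2 ![b i, v] ![1, c] (by simp [Fin.forall_fin_two, hv])
  simp only [Fin.sum_univ_two, Matrix.cons_val_zero, Matrix.cons_val_one,
    real_inner_self_eq_norm_sq, real_inner_comm (b i) v, hiv, hv, b.norm_eq_one] at hquad
  norm_num at hquad
  exact _root_.abs_le.mpr ⟨by linarith [hquad 1], by linarith [hquad (-1)]⟩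

theorem sum_nonneg {E : Type*} [NormedAddCommGroup E] [InnerProductSpace ℝ E]
    [FiniteDimensional ℝ E] (hE : Module.finrank ℝ E = N) {ι : Type*} [Fintype ι] (p : ι → E)
    (c : ι → ℝ) (hp : ∀ i, ‖p i‖ = 1) : 0 ≤ ∑ i, ∑ j, c i * c j * g ⟪p i, p j⟫ := by
  let L := ((stdOrthonormalBasis ℝ E).reindex (finCongr hE)).repr
  let e := Fintype.equivFin ι
  have h := hg _ (L ∘ p ∘ e.symm) (c ∘ e.symm) fun i => by simp [hp]
  simp only [Function.comp_apply, L.inner_map_map] at h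
  rw [e.symm.sum_comp fun i => ∑ j, c i * c (e.symm j) * g ⟪p i, p (e.symm j)⟫] at h
  refine h.trans_eq (Finset.sum_congr rfl fun i _ => ?_)
  exact e.symm.sum_comp fun j => c i * c j * g ⟪p i, p j⟫

theorem sub_average (hN : 2 ≤ N) (hgm : AEStronglyMeasurable g (gegenbauerMeasure N)) :
    PosSemidefOnSphere N fun t => g t - ⨍ u, g u ∂gegenbauerMeasure N := by
  intro M w c hw
  have : Nontrivial (EuclideanSpace ℝ (Fin N)) :=
    Module.nontrivial_of_finrank_pos (R := ℝ) (by simp; lia)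
  obtain ⟨ν, hν⟩ := exists_isUniformOnSphere (EuclideanSpace ℝ (Fin N))
  have := hν.isProbabilityMeasure
  have hint : ∀ x ∈ {x : EuclideanSpace ℝ (Fin N) | ‖x‖ = 1},
      Integrable (fun z => g ⟪x, z⟫) ν := fun x hx => by
    refine Integrable.of_bound (C := g 1) (hgm.comp_quasiMeasurePreserving
      (hν.quasiMeasurePreserving_inner finrank_euclideanSpace_fin hN hx)) ?_
    filter_upwards [hν.ae_abs_inner_le x] with z hz
    exact hg.abs_le hN (hz.trans_eq hx)
  have hmean := mul_sq_sum_le_kernel_sum (k := fun x y => g ⟪x, y⟫) (D := g 1)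
    hν.ae_norm_eq_one hg (fun x y => by rw [real_inner_comm])
    (fun x (hx : ‖x‖ = 1) => by simp [hx]) hint
    (fun x hx => hν.integral_comp_inner finrank_euclideanSpace_fin hN hx hgm) w c hw
  rw [sq, Finset.sum_mul_sum, mul_comm] at hmean
  simpa only [mul_sub, Finset.sum_sub_distrib, sub_nonneg, ← Finset.sum_mul] using hmean

theorem average_mul_sq_sum_le {E : Type*} [NormedAddCommGroup E] [InnerProductSpace ℝ E]
    [FiniteDimensional ℝ E] (hN : 2 ≤ N) (hgm : AEStronglyMeasurable g (gegenbauerMeasure N))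
    (hE : Module.finrank ℝ E = N) {ι : Type*} [Fintype ι] (p : ι → E) (c : ι → ℝ)
    (hp : ∀ i, ‖p i‖ = 1) :
    (⨍ u, g u ∂gegenbauerMeasure N) * (∑ i, c i) ^ 2 ≤ ∑ i, ∑ j, c i * c j * g ⟪p i, p j⟫ := by
  have h := (hg.sub_average hN hgm).sum_nonneg hE p c hp
  simp only [mul_sub, Finset.sum_sub_distrib, sub_nonneg, ← Finset.sum_mul] at h
  rwa [sq, Finset.sum_mul_sum, mul_comm]

theorem average_mul_sq_sum_le_of_inner_eq_zero {E : Type*} [NormedAddCommGroup E]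
    [InnerProductSpace ℝ E] [FiniteDimensional ℝ E] (hN : 2 ≤ N)
    (hgm : AEStronglyMeasurable g (gegenbauerMeasure N)) (hE : Module.finrank ℝ E = N + 1)
    {z : E} (hz : z ≠ 0) {ι : Type*} [Fintype ι] (p : ι → E) (c : ι → ℝ) (hp : ∀ i, ‖p i‖ = 1)
    (hpz : ∀ i, ⟪z, p i⟫ = 0) :
    (⨍ u, g u ∂gegenbauerMeasure N) * (∑ i, c i) ^ 2 ≤ ∑ i, ∑ j, c i * c j * g ⟪p i, p j⟫ := by
  have : Fact (Module.finrank ℝ E = N + 1) := ⟨hE⟩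
  exact hg.average_mul_sq_sum_le hN hgm (Submodule.finrank_orthogonal_span_singleton hz)
    (fun i => (⟨p i, Submodule.mem_orthogonal_singleton_iff_inner_right.mpr (hpz i)⟩ : (ℝ ∙ z)ᗮ))
    c hp

end PosSemidefOnSphere

theorem quasiMeasurePreserving_of_ae_comp {α β γ : Type*} [MeasurableSpace α] [MeasurableSpace β]
    [MeasurableSpace γ] {ν : Measure α} [SFinite ν] {τ : Measure β} [SFinite τ] [NeZero τ]
    {μ : Measure γ} {f : α → γ} (hf : Measurable f) {R : β → α → α}
    (hR : Measurable fun q : α × β => R q.2 q.1) (hRν : ∀ b, MeasurePreserving (R b) ν ν)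
    (h : ∀ᵐ z ∂ν, Measure.QuasiMeasurePreserving (fun b => f (R b z)) τ μ) :
    Measure.QuasiMeasurePreserving f ν μ := by
  refine ⟨hf, Measure.AbsolutelyContinuous.mk fun s hs hs0 => ?_⟩
  have hcomp : ∀ᵐ z ∂ν, ∀ᵐ b ∂τ, f (R b z) ∈ sᶜ := h.mono fun z hz =>
    hz.ae (measure_eq_zero_iff_ae_notMem.mp hs0)
  rw [Measure.ae_ae_comm (p := fun z b => f (R b z) ∈ sᶜ) ((hf.comp hR) hs.compl)] at hcomp
  obtain ⟨b, hb⟩ := hcomp.exists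
  rw [Measure.map_apply hf hs, ← (hRν b).measure_preimage (hf hs).nullMeasurableSet]
  exact measure_eq_zero_iff_ae_notMem.mpr hb

/-- The cosine of the angle between two sides of a spherical triangle, of lengths with cosines
`a` and `b`, in terms of the cosine `t` of the length of the third side (the spherical law of
cosines). It is the inner product of the projections of two points along a third one. -/
def sphericalAngleCos (t a b : ℝ) : ℝ := (t - a * b) / (√(1 - a ^ 2) * √(1 - b ^ 2))

theorem sphericalAngleCos_sq {t a b : ℝ} (ha : a ^ 2 < 1) (hb : b ^ 2 < 1) :
    sphericalAngleCos t a b ^ 2 = (t - a * b) ^ 2 / ((1 - a ^ 2) * (1 - b ^ 2)) := by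
  rw [sphericalAngleCos, div_pow, mul_pow, Real.sq_sqrt (by linarith), Real.sq_sqrt (by linarith)]

theorem sphericalAngleCos_add_ne_sub {t a v : ℝ} (ha : a ≠ 0) (hv : v ≠ 0) (ha1 : a ^ 2 < 1)
    (hadd : (t * a + v) ^ 2 < 1) (hsub : (t * a - v) ^ 2 < 1)
    (hv' : v ^ 2 < (1 - t ^ 2) * (1 - a ^ 2)) :
    sphericalAngleCos t a (t * a + v) ≠ sphericalAngleCos t a (t * a - v) := by
  intro heq
  have ha2 : 0 < 1 - a ^ 2 := by linarith
  have hadd2 : 0 < 1 - (t * a + v) ^ 2 := by linarith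
  have hsub2 : 0 < 1 - (t * a - v) ^ 2 := by linarith
  rcases eq_or_ne t 0 with rfl | ht
  · simp only [sphericalAngleCos, zero_mul, zero_add, zero_sub, neg_sq] at heq hadd2
    rw [div_left_inj' (by positivity)] at heq
    exact mul_ne_zero ha hv (by linarith)
  · have hsq := congrArg (· ^ 2) heq
    simp only [sphericalAngleCos_sq ha1 hadd, sphericalAngleCos_sq ha1 hsub] at hsq
    field_simp at hsq
    have : (4 * t * a * v) * ((1 - t ^ 2) * (1 - a ^ 2) - v ^ 2) = 0 := by
      linear_combination -hsq
    simp [ht, ha, hv] at this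
    linarith

theorem sq_mul_add_mul_lt_one {t s a p : ℝ} (hts : t ^ 2 + s ^ 2 = 1) (hat : a ^ 2 ≠ t ^ 2)
    (hap : a ^ 2 + p ^ 2 ≤ 1) : (t * a + s * p) ^ 2 < 1 := by
  have hlagrange : (t * a + s * p) ^ 2 + (t * p - s * a) ^ 2 = a ^ 2 + p ^ 2 := by
    linear_combination (a ^ 2 + p ^ 2) * hts
  refine lt_of_le_of_ne (by nlinarith [sq_nonneg (t * p - s * a)]) fun h => hat ?_
  have hcross : t * p - s * a = 0 :=
    sq_eq_zero_iff.mp (le_antisymm (by linarith) (sq_nonneg _))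
  have ha : t * (t * a + s * p) = a := by linear_combination a * hts + s * hcross
  linear_combination t ^ 2 * h - (t * (t * a + s * p) + a) * ha

theorem quasiMeasurePreserving_sphericalAngleCos {t s a p q : ℝ} (hts : t ^ 2 + s ^ 2 = 1)
    (hs : s ≠ 0) (ha : a ≠ 0) (hat : a ^ 2 ≠ t ^ 2) (hp : p ≠ 0) (hq : q ≠ 0)
    (hapq : a ^ 2 + p ^ 2 + q ^ 2 ≤ 1) :
    Measure.QuasiMeasurePreserving fun α : ℝ =>
      sphericalAngleCos t a (t * a + s * (p * cos α + q * sin α)) := by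
  have hp2 : 0 < p ^ 2 := by positivity
  have hq2 : 0 < q ^ 2 := by positivity
  have ha1 : a ^ 2 < 1 := by linarith
  have hlt (α : ℝ) : (t * a + s * (p * cos α + q * sin α)) ^ 2 < 1 := by
    refine sq_mul_add_mul_lt_one hts hat ?_
    have : (p * cos α + q * sin α) ^ 2 + (p * sin α - q * cos α) ^ 2 = p ^ 2 + q ^ 2 := by
      linear_combination (p ^ 2 + q ^ 2) * cos_sq_add_sin_sq α
    nlinarith [sq_nonneg (p * sin α - q * cos α)]
  have hcontDiff : ContDiff ℝ ⊤ fun α : ℝ =>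
      sphericalAngleCos t a (t * a + s * (p * cos α + q * sin α)) := by
    unfold sphericalAngleCos
    have hpos (α : ℝ) : 0 < 1 - (t * a + s * (p * cos α + q * sin α)) ^ 2 := by linarith [hlt α]
    have hapos : 0 < 1 - a ^ 2 := by linarith
    exact ContDiff.div (by fun_prop)
      (contDiff_const.mul (ContDiff.sqrt (by fun_prop) fun α => (hpos α).ne')) fun α => by
        have := hpos α
        positivity
  refine quasiMeasurePreserving_of_analytic (contDiff_omega_iff_analyticOnNhd.mp hcontDiff)
    (a := 0) (b := π) ?_
  have h0 := hlt 0
  have hπ := hlt π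
  simp only [cos_zero, sin_zero, cos_pi, sin_pi, mul_one, mul_zero, add_zero, mul_neg,
    ← sub_eq_add_neg] at h0 hπ ⊢
  refine sphericalAngleCos_add_ne_sub ha (mul_ne_zero hs hp) ha1 h0 hπ ?_
  have hs2 : 0 < s ^ 2 := by positivity
  have : 1 - t ^ 2 = s ^ 2 := by linarith
  rw [this, mul_pow]
  gcongr
  linarith

theorem norm_sub_inner_smul {E : Type*} [NormedAddCommGroup E] [InnerProductSpace ℝ E] {x z : E}
    (hx : ‖x‖ = 1) (hz : ‖z‖ = 1) : ‖x - ⟪x, z⟫ • z‖ = √(1 - ⟪x, z⟫ ^ 2) := by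
  rw [← Real.sqrt_sq (norm_nonneg _), norm_sub_sq_real, inner_smul_right, norm_smul, mul_pow,
    Real.norm_eq_abs, sq_abs, hx, hz]
  ring_nf

theorem exists_norm_eq_one_inner_eq_zero {E : Type*} [NormedAddCommGroup E]
    [InnerProductSpace ℝ E] [FiniteDimensional ℝ E] (hE : 3 ≤ Module.finrank ℝ E) (x y : E) :
    ∃ w : E, ‖w‖ = 1 ∧ ⟪x, w⟫ = 0 ∧ ⟪y, w⟫ = 0 := by
  let K : Submodule ℝ E := Submodule.span ℝ (Set.range ![x, y])
  have hK : Kᗮ ≠ ⊥ := by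
    have hrank : Module.finrank ℝ K ≤ 2 := by
      exact finrank_range_le_card (R := ℝ) ![x, y]
    have hadd := K.finrank_add_finrank_orthogonal
    intro h
    rw [h, finrank_bot] at hadd
    lia
  obtain ⟨w, hwK, hw⟩ := Kᗮ.exists_mem_ne_zero_of_ne_bot hK
  have hmem (i : Fin 2) : ⟪![x, y] i, w⟫ = 0 := hwK _ (Submodule.subset_span ⟨i, rfl⟩)
  refine ⟨‖w‖⁻¹ • w, norm_smul_inv_norm (𝕜 := ℝ) hw, ?_, ?_⟩
  · rw [inner_smul_right, show ⟪x, w⟫ = 0 from hmem 0, mul_zero]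
  · rw [inner_smul_right, show ⟪y, w⟫ = 0 from hmem 1, mul_zero]

section Projection

variable {n : ℕ} {x y z : EuclideanSpace ℝ (Fin n)}

theorem norm_projZ (hx : x ≠ 0) (hxz : z ∉ Submodule.span ℝ {x}) : ‖projZ z x‖ = 1 := by
  refine norm_smul_inv_norm (𝕜 := ℝ) fun h => hxz ?_
  rw [sub_eq_zero] at h
  have hinner : ⟪x, z⟫ ≠ 0 := fun h0 => hx (by rw [h, h0, zero_smul])
  exact Submodule.mem_span_singleton.mpr ⟨⟪x, z⟫⁻¹, (eq_inv_smul_iff₀ hinner).mpr h.symm |>.symm⟩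

theorem inner_projZ (x : EuclideanSpace ℝ (Fin n)) (hz : ‖z‖ = 1) : ⟪z, projZ z x⟫ = 0 := by
  rw [projZ, inner_smul_right, inner_sub_right, inner_smul_right, real_inner_self_eq_norm_sq, hz,
    real_inner_comm]
  ring

theorem inner_projZ_projZ (hx : ‖x‖ = 1) (hy : ‖y‖ = 1) (hz : ‖z‖ = 1) :
    ⟪projZ z x, projZ z y⟫ = sphericalAngleCos ⟪x, y⟫ ⟪x, z⟫ ⟪y, z⟫ := by
  rw [projZ, projZ, norm_sub_inner_smul hx hz, norm_sub_inner_smul hy hz, sphericalAngleCos]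
  simp only [inner_sub_left, inner_sub_right, inner_smul_left, inner_smul_right,
    real_inner_self_eq_norm_sq, hz, real_inner_comm y z, conj_trivial]
  field_simp
  ring

theorem projZ_neg (z x : EuclideanSpace ℝ (Fin n)) : projZ z (-x) = -projZ z x := by
  rw [projZ, projZ, inner_neg_left, neg_smul, ← neg_sub', norm_neg, smul_neg]

theorem measurable_inner_projZ (x y : EuclideanSpace ℝ (Fin n)) :
    Measurable fun z => ⟪projZ z x, projZ z y⟫ := by
  unfold projZ
  fun_prop

theorem exists_orthonormal_frame (hn : 3 ≤ n) (hx : ‖x‖ = 1) (hy : ‖y‖ = 1)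
    (hxy : ⟪x, y⟫ ^ 2 < 1) : ∃ u w : EuclideanSpace ℝ (Fin n),
      Orthonormal ℝ ![x, u, w] ∧ y = ⟪x, y⟫ • x + √(1 - ⟪x, y⟫ ^ 2) • u := by
  have hpos : 0 < √(1 - ⟪x, y⟫ ^ 2) := Real.sqrt_pos.mpr (by linarith)
  have hnorm : ‖y - ⟪y, x⟫ • x‖ = √(1 - ⟪x, y⟫ ^ 2) := by
    rw [norm_sub_inner_smul hy hx, real_inner_comm]
  obtain ⟨w, hw, hxw, hyw⟩ := exists_norm_eq_one_inner_eq_zero (by simpa using hn) x y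
  refine ⟨projZ x y, w, ?_, ?_⟩
  · have huw : ⟪projZ x y, w⟫ = 0 := by
      simp [projZ, inner_smul_left, inner_sub_left, hxw, hyw]
    have hu : ‖projZ x y‖ = 1 :=
      norm_smul_inv_norm (𝕜 := ℝ) (norm_ne_zero_iff.mp (hnorm ▸ hpos.ne'))
    simp [orthonormal_vecCons_iff, Fin.forall_fin_two, hx, hw, hu, huw, hxw, inner_projZ y hx]
  · rw [projZ, hnorm, smul_inv_smul₀ hpos.ne', real_inner_comm]
    module

end Projection

theorem reflection_orthogonal_span_singleton_apply {E : Type*} [NormedAddCommGroup E]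
    [InnerProductSpace ℝ E] {v : E} (hv : ‖v‖ = 1) (z : E) :
    (ℝ ∙ v)ᗮ.reflection z = z - (2 * ⟪v, z⟫) • v := by
  rw [Submodule.reflection_orthogonal_apply, Submodule.reflection_singleton_apply, hv]
  simp [mul_smul, ofNat_smul_eq_nsmul]

theorem exists_continuous_reflection_family {E : Type*} [NormedAddCommGroup E]
    [InnerProductSpace ℝ E] {u w : E} (hu : ‖u‖ = 1) (hw : ‖w‖ = 1) (huw : ⟪u, w⟫ = 0) :
    ∃ R : ℝ → E ≃ₗᵢ[ℝ] E, (Continuous fun q : E × ℝ => R q.2 q.1) ∧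
      (∀ x : E, ⟪x, u⟫ = 0 → ⟪x, w⟫ = 0 → ∀ α z, ⟪x, R α z⟫ = ⟪x, z⟫) ∧
      ∀ α z, ⟪u, R α z⟫ = ⟪u, z⟫ * cos α + ⟪w, z⟫ * sin α := by
  let e (α : ℝ) : E := sin (α / 2) • u - cos (α / 2) • w
  have he (α : ℝ) : ‖e α‖ = 1 := by
    refine (sq_eq_sq₀ (norm_nonneg _) zero_le_one).mp ?_
    rw [norm_sub_sq_real]
    simp [norm_smul, inner_smul_left, inner_smul_right, huw, hu, hw]
  have hR (α : ℝ) (z : E) := reflection_orthogonal_span_singleton_apply (he α) z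
  refine ⟨fun α => (ℝ ∙ e α)ᗮ.reflection, ?_, fun x hxu hxw α z => ?_, fun α z => ?_⟩
  · simp only [hR, e]
    fun_prop
  · simp [hR, e, inner_sub_right, inner_smul_right, hxu, hxw]
  · have hcos : cos α = 1 - 2 * sin (α / 2) ^ 2 := by
      rw [← cos_two_mul_eq_one_sub, mul_div_cancel₀ α two_ne_zero]
    have hsin : sin α = 2 * sin (α / 2) * cos (α / 2) := by
      rw [← sin_two_mul, mul_div_cancel₀ α two_ne_zero]
    simp only [hR, e, inner_sub_left, inner_sub_right, inner_smul_left, inner_smul_right,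
      real_inner_self_eq_norm_sq, hu, huw, hcos, hsin, conj_trivial]
    ring

namespace IsUniformOnSphere

variable {n : ℕ} {ν : Measure (EuclideanSpace ℝ (Fin n))} (h : IsUniformOnSphere ν)
  {x y : EuclideanSpace ℝ (Fin n)}
include h

theorem ae_norm_projZ (hn : 2 ≤ n) (hx : x ≠ 0) : ∀ᵐ z ∂ν, ‖projZ z x‖ = 1 := by
  have hspan : Submodule.span ℝ {x} ≠ ⊤ := fun htop => by
    have := finrank_span_singleton (K := ℝ) hx
    rw [htop, finrank_top, finrank_euclideanSpace_fin] at this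
    lia
  exact (h.ae_notMem_submodule (by simpa using hn) hspan).mono fun z => norm_projZ hx

theorem quasiMeasurePreserving_inner_projZ (hn : 3 ≤ n) (hx : ‖x‖ = 1) (hy : ‖y‖ = 1)
    (hxy : ⟪x, y⟫ ^ 2 < 1) :
    Measure.QuasiMeasurePreserving (fun z => ⟪projZ z x, projZ z y⟫) ν := by
  have := h.isProbabilityMeasure
  obtain ⟨u, w, hframe, hyxu⟩ := exists_orthonormal_frame hn hx hy hxy
  have ⟨hu, hw, hxu, hxw, huw⟩ : ‖u‖ = 1 ∧ ‖w‖ = 1 ∧ ⟪x, u⟫ = 0 ∧ ⟪x, w⟫ = 0 ∧ ⟪u, w⟫ = 0 :=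
    ⟨hframe.1 1, hframe.1 2, hframe.2 (i := 0) (j := 1) (by simp),
      hframe.2 (i := 0) (j := 2) (by simp), hframe.2 (i := 1) (j := 2) (by simp)⟩
  obtain ⟨R, hR, hRx, hRu⟩ := exists_continuous_reflection_family hu hw huw
  set t := ⟪x, y⟫
  have hRy (α : ℝ) (z) : ⟪y, R α z⟫ =
      t * ⟪x, z⟫ + √(1 - t ^ 2) * (⟪u, z⟫ * cos α + ⟪w, z⟫ * sin α) := by
    conv_lhs => rw [hyxu]
    rw [inner_add_left, real_inner_smul_left, real_inner_smul_left, hRx x hxu hxw, hRu]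
  refine quasiMeasurePreserving_of_ae_comp (τ := (volume : Measure ℝ))
    (measurable_inner_projZ x y) (R := fun α => R α) hR.measurable
    (fun α => h.measurePreserving (R α)) ?_
  have hdim : 2 ≤ Module.finrank ℝ (EuclideanSpace ℝ (Fin n)) := by simp; lia
  filter_upwards [h.ae_norm_eq_one, h.ae_inner_ne hdim hx 0, h.ae_inner_ne hdim hx t,
    h.ae_inner_ne hdim hx (-t), h.ae_inner_ne hdim hu 0, h.ae_inner_ne hdim hw 0]
    with z hz hxz hxzt hxzt' huz hwz
  have hbessel := hframe.sum_inner_products_le z (s := Finset.univ)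
  simp_rw [fun α => inner_projZ_projZ hx hy (z := R α z) (by simp [hz]), hRx x hxu hxw, hRy]
  refine quasiMeasurePreserving_sphericalAngleCos ?_ ?_ hxz ?_ huz hwz ?_
  · rw [Real.sq_sqrt (by linarith)]; ring
  · exact (Real.sqrt_pos.mpr (by linarith)).ne'
  · simpa [sq_eq_sq_iff_eq_or_eq_neg] using ⟨hxzt, hxzt'⟩
  · simpa [Fin.sum_univ_three, hz] using hbessel

theorem quasiMeasurePreserving_inner_projZ_gegenbauerMeasure (hn : 3 ≤ n) (hx : ‖x‖ = 1)
    (hy : ‖y‖ = 1) (hxy : ⟪x, y⟫ ^ 2 < 1) (N : ℕ) :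
    Measure.QuasiMeasurePreserving (fun z => ⟪projZ z x, projZ z y⟫) ν (gegenbauerMeasure N) := by
  have hqmp := h.quasiMeasurePreserving_inner_projZ hn hx hy hxy
  have hmem : ∀ᵐ t ∂ν.map (fun z => ⟪projZ z x, projZ z y⟫), t ∈ Set.Ioo (-1 : ℝ) 1 := by
    refine (ae_map_iff hqmp.measurable.aemeasurable measurableSet_Ioo).mpr ?_
    filter_upwards [h.ae_norm_projZ (by lia) (norm_ne_zero_iff.mp (hx ▸ one_ne_zero)),
      h.ae_norm_projZ (by lia) (norm_ne_zero_iff.mp (hy ▸ one_ne_zero)),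
      hqmp.ae (Measure.ae_ne volume 1), hqmp.ae (Measure.ae_ne volume (-1))] with z hzx hzy h1 h2
    have habs := abs_le.mp (abs_real_inner_le_norm (projZ z x) (projZ z y))
    rw [hzx, hzy, one_mul] at habs
    exact ⟨habs.1.lt_of_ne' h2, habs.2.lt_of_ne h1⟩
  refine ⟨hqmp.measurable, ?_⟩
  rw [← Measure.restrict_eq_self_of_ae_mem hmem]
  exact (hqmp.absolutelyContinuous.restrict _).trans (absolutelyContinuous_gegenbauerMeasure N)

theorem aestronglyMeasurable_comp_inner_projZ (hn : 3 ≤ n) (hx : ‖x‖ = 1) (hy : ‖y‖ = 1) {N : ℕ}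
    {g : ℝ → ℝ} (hg : AEStronglyMeasurable g (gegenbauerMeasure N)) :
    AEStronglyMeasurable (fun z => g ⟪projZ z x, projZ z y⟫) ν := by
  have hle : |⟪x, y⟫| ≤ 1 := by simpa [hx, hy] using abs_real_inner_le_norm x y
  have hnorm := h.ae_norm_projZ (by lia) (norm_ne_zero_iff.mp (hy ▸ one_ne_zero))
  rcases hle.lt_or_eq with hlt | heq
  · exact hg.comp_quasiMeasurePreserving
      (h.quasiMeasurePreserving_inner_projZ_gegenbauerMeasure hn hx hy
        ((sq_lt_one_iff_abs_lt_one _).mpr hlt) N)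
  rcases eq_or_eq_neg_of_abs_eq heq with h1 | h1
  · obtain rfl := (inner_eq_one_iff_of_norm_eq_one hx hy).mp h1
    refine (aestronglyMeasurable_const (b := g 1)).congr ?_
    filter_upwards [hnorm] with z hz
    simp [hz]
  · obtain rfl := (inner_eq_neg_one_iff_of_norm_eq_one hx hy).mp h1
    refine (aestronglyMeasurable_const (b := g (-1))).congr ?_
    filter_upwards [hnorm] with z hz
    simp [projZ_neg, hz]

end IsUniformOnSphere

/-- The kernel `H(x, y)` obtained by averaging over `z` the kernel `g` applied to the projections
of `x` and `y` to the equator of `z`, with the heights `⟪x, z⟫` and `⟪y, z⟫` weighted by `F`. -/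
def averagedKernel {n : ℕ} (ν : Measure (EuclideanSpace ℝ (Fin n))) (F g : ℝ → ℝ)
    (x y : EuclideanSpace ℝ (Fin n)) : ℝ :=
  ∫ z, F ⟪x, z⟫ * F ⟪y, z⟫ * g ⟪projZ z x, projZ z y⟫ ∂ν

section AveragedKernel

variable {n : ℕ} (hn : 3 ≤ n) {ν : Measure (EuclideanSpace ℝ (Fin n))}
  (hν : IsUniformOnSphere ν) {F : ℝ → ℝ} {g : ℝ → ℝ}

include hn hν in
theorem averagedKernel_self {x : EuclideanSpace ℝ (Fin n)} (hx : ‖x‖ = 1)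
    (hF : AEStronglyMeasurable F (gegenbauerMeasure n)) :
    averagedKernel ν F g x x = g 1 * ⨍ t, F t ^ 2 ∂gegenbauerMeasure n := by
  rw [averagedKernel, ← hν.integral_comp_inner finrank_euclideanSpace_fin (by lia) hx
    ((continuous_pow 2).comp_aestronglyMeasurable hF), ← integral_const_mul]
  refine integral_congr_ae ?_
  filter_upwards [hν.ae_norm_projZ (by lia) (norm_ne_zero_iff.mp (hx ▸ one_ne_zero))] with z hz
  simp only [real_inner_self_eq_norm_sq, hz, one_pow]
  ring

variable (hF : MemLp F 2 (gegenbauerMeasure n)) (hg : PosSemidefOnSphere (n - 1) g)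
  (hgm : AEStronglyMeasurable g (gegenbauerMeasure (n - 1)))
include hn hν hF hg hgm

theorem integrable_averagedKernel {x y : EuclideanSpace ℝ (Fin n)} (hx : ‖x‖ = 1)
    (hy : ‖y‖ = 1) :
    Integrable (fun z => F ⟪x, z⟫ * F ⟪y, z⟫ * g ⟪projZ z x, projZ z y⟫) ν := by
  have hF' {u : EuclideanSpace ℝ (Fin n)} (hu : ‖u‖ = 1) : MemLp (fun z => F ⟪u, z⟫) 2 ν :=
    hν.memLp_comp_inner finrank_euclideanSpace_fin (by lia) hu hF
  refine ((hF' hx).integrable_mul (hF' hy)).mul_bdd (c := g 1)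
    (hν.aestronglyMeasurable_comp_inner_projZ hn hx hy hgm) ?_
  filter_upwards [hν.ae_norm_projZ (by lia) (norm_ne_zero_iff.mp (hx ▸ one_ne_zero)),
    hν.ae_norm_projZ (by lia) (norm_ne_zero_iff.mp (hy ▸ one_ne_zero))] with z hzx hzy
  exact hg.abs_le (by lia)
    (by simpa [hzx, hzy] using abs_real_inner_le_norm (projZ z x) (projZ z y))

theorem average_mul_integral_sq_le_sum_averagedKernel {ι : Type*} [Fintype ι]
    {x : ι → EuclideanSpace ℝ (Fin n)} (hx : ∀ i, ‖x i‖ = 1) (c : ι → ℝ) :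
    (⨍ t, g t ∂gegenbauerMeasure (n - 1)) * ∫ z, (∑ i, c i * F ⟪x i, z⟫) ^ 2 ∂ν ≤
      ∑ i, ∑ j, c i * c j * averagedKernel ν F g (x i) (x j) := by
  have hint (i j) := (integrable_averagedKernel hn hν hF hg hgm (hx i) (hx j)).const_mul (c i * c j)
  have hF' (i) : MemLp (fun z => c i * F ⟪x i, z⟫) 2 ν :=
    (hν.memLp_comp_inner finrank_euclideanSpace_fin (by lia) (hx i) hF).const_mul (c i)
  have hproj : ∀ᵐ z ∂ν, ∀ i, ‖projZ z (x i)‖ = 1 := ae_all_iff.mpr fun i =>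
    hν.ae_norm_projZ (by lia) (norm_ne_zero_iff.mp (hx i ▸ one_ne_zero))
  simp only [averagedKernel, ← integral_const_mul]
  simp_rw [← integral_finsetSum _ fun j _ => hint _ j]
  rw [← integral_finsetSum _ fun i _ => integrable_finsetSum _ fun j _ => hint i j]
  refine integral_mono_ae ((memLp_finsetSum _ fun i _ => hF' i).integrable_sq.const_mul _)
    (integrable_finsetSum _ fun i _ => integrable_finsetSum _ fun j _ => hint i j) ?_
  filter_upwards [hν.ae_norm_eq_one, hproj] with z hz hzx
  refine (hg.average_mul_sq_sum_le_of_inner_eq_zero (by lia) hgm (by simp; lia)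
    (norm_ne_zero_iff.mp (hz ▸ one_ne_zero)) (fun i => projZ z (x i)) (fun i => c i * F ⟪x i, z⟫)
    hzx fun i => inner_projZ (x i) hz).trans_eq ?_
  exact Finset.sum_congr rfl fun i _ => Finset.sum_congr rfl fun j _ => by ring

theorem average_mul_sq_le_sum_averagedKernel (hg0 : 0 ≤ ⨍ t, g t ∂gegenbauerMeasure (n - 1))
    {ι : Type*} [Fintype ι] {x : ι → EuclideanSpace ℝ (Fin n)} (hx : ∀ i, ‖x i‖ = 1) (c : ι → ℝ) :
    (⨍ t, g t ∂gegenbauerMeasure (n - 1)) * ((∑ i, c i) * ⨍ t, F t ∂gegenbauerMeasure n) ^ 2 ≤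
      ∑ i, ∑ j, c i * c j * averagedKernel ν F g (x i) (x j) := by
  have := hν.isProbabilityMeasure
  have hF' (i) : MemLp (fun z => c i * F ⟪x i, z⟫) 2 ν :=
    (hν.memLp_comp_inner finrank_euclideanSpace_fin (by lia) (hx i) hF).const_mul (c i)
  have hmean : ∫ z, ∑ i, c i * F ⟪x i, z⟫ ∂ν = (∑ i, c i) * ⨍ t, F t ∂gegenbauerMeasure n := by
    rw [integral_finsetSum _ fun i _ => (hF' i).integrable one_le_two, Finset.sum_mul]
    refine Finset.sum_congr rfl fun i _ => ?_
    rw [integral_const_mul, hν.integral_comp_inner finrank_euclideanSpace_fin (by lia) (hx i)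
      hF.1]
  have hvariance := variance_nonneg (fun z => ∑ i, c i * F ⟪x i, z⟫) ν
  rw [variance_eq_sub (memLp_finsetSum _ fun i _ => hF' i), hmean, sub_nonneg] at hvariance
  exact (mul_le_mul_of_nonneg_left hvariance hg0).trans
    (average_mul_integral_sq_le_sum_averagedKernel hn hν hF hg hgm hx c)

end AveragedKernel

theorem sum_sum_le_card_mul {α : Type*} {A : Finset α} {K : α → α → ℝ} {D : ℝ}
    (hdiag : ∀ x ∈ A, K x x ≤ D) (hoff : ∀ x ∈ A, ∀ y ∈ A, x ≠ y → K x y ≤ 0) :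
    ∑ x ∈ A, ∑ y ∈ A, K x y ≤ A.card * D := by
  classical
  rw [← nsmul_eq_mul]
  refine Finset.sum_le_card_nsmul A _ D fun x hx => ?_
  rw [← Finset.add_sum_erase A _ hx]
  have herase : ∑ y ∈ A.erase x, K x y ≤ 0 := Finset.sum_nonpos fun y hy =>
    hoff x hx y (Finset.mem_of_mem_erase hy) (Finset.ne_of_mem_erase hy).symm
  linarith [hdiag x hx]

section CodeBound

variable {n : ℕ} {ν : Measure (EuclideanSpace ℝ (Fin n))} {F g : ℝ → ℝ} {θ : ℝ} (hn : 3 ≤ n)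
  (hν : IsUniformOnSphere ν) (hF : MemLp F 2 (gegenbauerMeasure n))
  (hF0 : ⨍ t, F t ∂gegenbauerMeasure n ≠ 0) (hg : PosSemidefOnSphere (n - 1) g)
  (hg0 : 0 < ⨍ t, g t ∂gegenbauerMeasure (n - 1))
  (hH : ∀ x y : EuclideanSpace ℝ (Fin n), ‖x‖ = 1 → ‖y‖ = 1 → ⟪x, y⟫ ≤ cos θ →
    averagedKernel ν F g x y ≤ 0)
include hn hν hF hF0 hg hg0 hH

theorem card_le_of_averagedKernel_nonpos {A : Finset (EuclideanSpace ℝ (Fin n))}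
    (hA : ∀ x ∈ A, ‖x‖ = 1) (hAθ : ∀ x ∈ A, ∀ y ∈ A, x ≠ y → ⟪x, y⟫ ≤ cos θ) :
    (A.card : ℝ) ≤ g 1 / (⨍ t, g t ∂gegenbauerMeasure (n - 1)) *
      ((⨍ t, F t ^ 2 ∂gegenbauerMeasure n) / (⨍ t, F t ∂gegenbauerMeasure n) ^ 2) := by
  have hgm : AEStronglyMeasurable g (gegenbauerMeasure (n - 1)) := by
    rw [average_eq, smul_eq_mul] at hg0
    exact (Integrable.of_integral_ne_zero (right_ne_zero_of_mul hg0.ne')).1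
  have hlower := average_mul_sq_le_sum_averagedKernel hn hν hF hg hgm hg0.le
    (x := fun a : A => a) (fun a => hA a a.2) fun _ => 1
  have hupper := sum_sum_le_card_mul (K := averagedKernel ν F g)
    (fun x hx => (averagedKernel_self hn hν (hA x hx) hF.1).le)
    fun x hx y hy hxy => hH x y (hA x hx) (hA y hy) (hAθ x hx y hy hxy)
  simp only [Finset.sum_const, Finset.card_univ, Fintype.card_coe, nsmul_eq_mul, mul_one, one_mul,
    A.sum_coe_sort (averagedKernel ν F g _)] at hlower
  rw [A.sum_coe_sort fun x => ∑ y ∈ A, averagedKernel ν F g x y] at hlower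
  have hg1 : 0 ≤ g 1 := (abs_nonneg _).trans (hg.abs_le (by lia) abs_one.le)
  have hF2 : 0 ≤ ⨍ t, F t ^ 2 ∂gegenbauerMeasure n := integral_nonneg fun t => sq_nonneg _
  rcases A.eq_empty_or_nonempty with rfl | hAne
  · rw [Finset.card_empty, Nat.cast_zero]
    positivity
  · have hcard : (0 : ℝ) < A.card := by exact_mod_cast hAne.card_pos
    rw [div_mul_div_comm, le_div_iff₀ (by positivity)]
    refine le_of_mul_le_mul_left ?_ hcard
    linarith

theorem Mcode_le_of_averagedKernel_nonpos :
    (Mcode n θ : ℝ) ≤ g 1 / (⨍ t, g t ∂gegenbauerMeasure (n - 1)) *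
      ((⨍ t, F t ^ 2 ∂gegenbauerMeasure n) / (⨍ t, F t ∂gegenbauerMeasure n) ^ 2) := by
  have hcard {A : Finset (EuclideanSpace ℝ (Fin n))} :=
    card_le_of_averagedKernel_nonpos hn hν hF hF0 hg hg0 hH (A := A)
  have hnonneg := (Nat.cast_nonneg _).trans (hcard (A := ∅) (by simp) (by simp))
  refine (Nat.le_floor_iff hnonneg).mp (csSup_le ⟨0, ∅, by simp⟩ ?_)
  rintro _ ⟨A, rfl, hA, hAθ⟩
  exact Nat.le_floor (hcard hA hAθ)

end CodeBound

theorem spherical_code_LP_from_projection_general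
    {n : ℕ} (hn : 3 ≤ n) {θ : ℝ} {g : ℝ → ℝ} (hg : PosSemidefOnSphere (n - 1) g)
    (hg0 : 0 < ∫ t in (-1 : ℝ)..1, g t * (1 - t ^ 2) ^ ((((n - 1 : ℕ) : ℝ) - 3) / 2))
    {F : ℝ → ℝ} (hF : MemLp F 2 (gegenbauerMeasure n))
    (hFne : (∫ t in (-1 : ℝ)..1, F t * (1 - t ^ 2) ^ (((n : ℝ) - 3) / 2)) ≠ 0)
    {σ : Measure (Metric.sphere (0 : EuclideanSpace ℝ (Fin n)) 1)} (hσ : IsInvProbSphere n σ)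
    (hH : ∀ x y : EuclideanSpace ℝ (Fin n), ‖x‖ = 1 → ‖y‖ = 1 → ⟪x, y⟫ ≤ cos θ →
      (∫ z, F ⟪x, (z : EuclideanSpace ℝ (Fin n))⟫ * F ⟪y, (z : EuclideanSpace ℝ (Fin n))⟫ *
          g ⟪projZ (z : EuclideanSpace ℝ (Fin n)) x,
              projZ (z : EuclideanSpace ℝ (Fin n)) y⟫ ∂σ) ≤ 0) :
    (Mcode n θ : ℝ) ≤
      (g 1 * (∫ t in (-1 : ℝ)..1, (1 - t ^ 2) ^ (((n : ℝ) - 4) / 2)) /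
          (∫ t in (-1 : ℝ)..1, g t * (1 - t ^ 2) ^ (((n : ℝ) - 4) / 2))) *
        ((∫ t in (-1 : ℝ)..1, F t ^ 2 * (1 - t ^ 2) ^ (((n : ℝ) - 3) / 2)) *
            (∫ t in (-1 : ℝ)..1, (1 - t ^ 2) ^ (((n : ℝ) - 3) / 2)) /
          (∫ t in (-1 : ℝ)..1, F t * (1 - t ^ 2) ^ (((n : ℝ) - 3) / 2)) ^ 2) := by
  have hweight (t : ℝ) : (1 - t ^ 2) ^ (((n : ℝ) - 4) / 2) = gegenbauerWeight (n - 1) t := by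
    rw [gegenbauerWeight, Nat.cast_pred (by lia)]
    ring_nf
  have hweight' (t : ℝ) : (1 - t ^ 2) ^ (((n : ℝ) - 3) / 2) = gegenbauerWeight n t := rfl
  have hmass := integral_gegenbauerWeight_pos (n := n) (by lia)
  have hmass' := integral_gegenbauerWeight_pos (n := n - 1) (by lia)
  have hbound := Mcode_le_of_averagedKernel_nonpos hn hσ.isUniformOnSphere_map hF
    (by rw [average_gegenbauerMeasure]; exact div_ne_zero hFne hmass.ne') hg
    (by rw [average_gegenbauerMeasure]; exact div_pos hg0 hmass') (θ := θ)
    (fun x y hx hy hxy => (((MeasurableEmbedding.subtype_coe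
      Metric.isClosed_sphere.measurableSet).integral_map _).trans_le (hH x y hx hy hxy)))
  simp only [average_gegenbauerMeasure] at hbound
  simp only [hweight, hweight']
  refine hbound.trans_eq ?_
  field_simp

/-- Proposition 3.6 of Sardari–Zargar. The Delsarte bound on `M(n, θ)`
obtained from averaging a Delsarte function `g` for `M(n-1, θ')` over `S^{n-1}`. -/
theorem spherical_code_LP_from_projection
    (n : ℕ) (hn : 3 ≤ n) (θ θ' : ℝ) (hθ0 : 0 < θ) (hθθ' : θ < θ') (hθ' : θ' ≤ π / 2)
    (g : ℝ → ℝ) (hg : DelsarteLP (n - 1) θ' g)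
    (F : ℝ → ℝ) (hFmeas : Measurable F) (CF : ℝ) (hFbd : ∀ t, |F t| ≤ CF)
    (hFne : (∫ t in (-1 : ℝ)..1, F t * (1 - t ^ 2) ^ (((n : ℝ) - 3) / 2)) ≠ 0)
    (σ : Measure (Metric.sphere (0 : EuclideanSpace ℝ (Fin n)) 1))
    (hσ : IsInvProbSphere n σ)
    (hH : ∀ x y : EuclideanSpace ℝ (Fin n), ‖x‖ = 1 → ‖y‖ = 1 → ⟪x, y⟫ ≤ Real.cos θ →
      (∫ z, F ⟪x, (z : EuclideanSpace ℝ (Fin n))⟫ * F ⟪y, (z : EuclideanSpace ℝ (Fin n))⟫ *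
          g ⟪projZ (z : EuclideanSpace ℝ (Fin n)) x,
              projZ (z : EuclideanSpace ℝ (Fin n)) y⟫ ∂σ) ≤ 0) :
    (Mcode n θ : ℝ) ≤
      (g 1 * (∫ t in (-1 : ℝ)..1, (1 - t ^ 2) ^ (((n : ℝ) - 4) / 2)) /
          (∫ t in (-1 : ℝ)..1, g t * (1 - t ^ 2) ^ (((n : ℝ) - 4) / 2))) *
        ((∫ t in (-1 : ℝ)..1, F t ^ 2 * (1 - t ^ 2) ^ (((n : ℝ) - 3) / 2)) *
            (∫ t in (-1 : ℝ)..1, (1 - t ^ 2) ^ (((n : ℝ) - 3) / 2)) /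
          (∫ t in (-1 : ℝ)..1, F t * (1 - t ^ 2) ^ (((n : ℝ) - 3) / 2)) ^ 2) := by
  have := isFiniteMeasure_gegenbauerMeasure (n := n) (by lia)
  exact spherical_code_LP_from_projection_general hn hg.1 hg.2.2
    (.of_bound hFmeas.aestronglyMeasurable CF (.of_forall hFbd)) hFne hσ hH
end
end

section
/- Fix integers 1 ≤ m ≤ n−2, an integrable F:[−1,1]^m→ℝ, orthonormal vectors z_1,…,z_m ∈ S^{n−1}, and g:[−1,1]→ℝ positive semi-definite on S^{n−m−1}. Then for any finite set x_1,…,x_N ∈ S^{n−1} with no x_i lying in span(z_1,…,z_m) and any reals c_1,…,c_N, one has Σ_{i,j} c_i c_j h(x_i,x_j;z_1,…,z_m) ≥ 0. In particular, the averaged function H is positive semi-definite on S^{n−1}: for any finite x_1,…,x_N ∈ S^{n−1} the matrix [H(x_i,x_j)]_{i,j} is positive semi-definite. -/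
open MeasureTheory Filter Real
open scoped RealInnerProductSpace

noncomputable section

/-- The Stiefel manifold of orthonormal `m`-frames in `ℝ^n`. -/
abbrev Stiefel (n m : ℕ) : Type :=
  {z : Fin m → EuclideanSpace ℝ (Fin n) // Orthonormal ℝ z}

/-- Action of a linear isometry on frames. -/
def frameMap {n m : ℕ} (A : EuclideanSpace ℝ (Fin n) ≃ₗᵢ[ℝ] EuclideanSpace ℝ (Fin n))
    (z : Stiefel n m) : Stiefel n m :=
  ⟨fun i => A (z.1 i), z.2.comp_linearIsometry A.toLinearIsometry⟩

/-- `ν` is an `O(n)`-invariant probability measure on the Stiefel manifold. -/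
def IsInvProb {n m : ℕ} (ν : Measure (Stiefel n m)) : Prop :=
  IsProbabilityMeasure ν ∧
    ∀ A : EuclideanSpace ℝ (Fin n) ≃ₗᵢ[ℝ] EuclideanSpace ℝ (Fin n),
      Measure.map (frameMap A) ν = ν

/-- Normalized projection of `x` onto the orthogonal complement of `span (z 1, …, z m)`. -/
def projC {n m : ℕ} (z : Fin m → EuclideanSpace ℝ (Fin n)) (x : EuclideanSpace ℝ (Fin n)) :
    EuclideanSpace ℝ (Fin n) :=
  ‖x - ∑ i, ⟪x, z i⟫ • z i‖⁻¹ • (x - ∑ i, ⟪x, z i⟫ • z i)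

/-- The integrand `h(x, y; z₁, …, z_m)`. -/
def hfun {n m : ℕ} (F : (Fin m → ℝ) → ℝ) (g : ℝ → ℝ)
    (x y : EuclideanSpace ℝ (Fin n)) (z : Fin m → EuclideanSpace ℝ (Fin n)) : ℝ :=
  F (fun i => ⟪x, z i⟫) * F (fun i => ⟪y, z i⟫) * g ⟪projC z x, projC z y⟫

/-- The Stiefel average `H(x,y)`. -/
def Hfun {n m : ℕ} (ν : Measure (Stiefel n m)) (F : (Fin m → ℝ) → ℝ) (g : ℝ → ℝ)
    (x y : EuclideanSpace ℝ (Fin n)) : ℝ :=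
  ∫ z, hfun F g x y z.1 ∂ν

/-!
For a frame `z` whose span avoids the points `x i`, the matrix of `h` is the matrix of `g` at the
normalized projections of the `x i`, which lie on the unit sphere of `(span z)ᗮ`, conjugated by
the diagonal matrix of the weights `F`; hence it is positive semi-definite. For an invariant `ν`
almost every frame avoids a given `y ≠ 0`: the span of a frame is a proper subspace, hence
Lebesgue-null, so by Fubini some `x ≠ 0` is avoided by almost every frame, and invariance under an
isometry carrying `y` to a multiple of `x` transfers this to `y`. Integrating the quadratic forms
of `h` then gives the claim for `H`.
-/

open Module (finrank)
open Submodule (span)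

section Projection

variable {𝕜 E ι : Type*} [RCLike 𝕜] [NormedAddCommGroup E] [InnerProductSpace 𝕜 E] [Fintype ι]
  {v : ι → E} [(span 𝕜 (Set.range v)).HasOrthogonalProjection]

theorem starProjection_span_range_apply (hv : Orthonormal 𝕜 v) (x : E) :
    (span 𝕜 (Set.range v)).starProjection x = ∑ i, inner 𝕜 (v i) x • v i := by
  refine Submodule.eq_starProjection_of_mem_orthogonal ?_ ?_
  · exact Submodule.sum_mem _ fun i _ ↦
      Submodule.smul_mem _ _ (Submodule.subset_span (Set.mem_range_self i))
  · rw [← Submodule.span_singleton_le_iff_mem, ← Submodule.isOrtho_iff_le, Submodule.isOrtho_span]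
    rintro _ rfl _ ⟨i, rfl⟩
    rw [inner_eq_zero_symm, inner_sub_right, hv.inner_right_fintype, sub_self]

theorem mem_span_range_iff_sum_inner_smul_eq (hv : Orthonormal 𝕜 v) (x : E) :
    x ∈ span 𝕜 (Set.range v) ↔ ∑ i, inner 𝕜 (v i) x • v i = x := by
  rw [← Submodule.starProjection_eq_self_iff, starProjection_span_range_apply hv]

end Projection

theorem finrank_orthogonal_span_range {𝕜 E ι : Type*} [RCLike 𝕜] [NormedAddCommGroup E]
    [InnerProductSpace 𝕜 E] [FiniteDimensional 𝕜 E] [Fintype ι] {v : ι → E}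
    (hv : LinearIndependent 𝕜 v) :
    finrank 𝕜 (span 𝕜 (Set.range v))ᗮ = finrank 𝕜 E - Fintype.card ι := by
  rw [← (span 𝕜 (Set.range v)).finrank_add_finrank_orthogonal, finrank_span_eq_card hv,
    Nat.add_sub_cancel_left]

theorem exists_linearIsometryEquiv_apply_eq {E : Type*} [NormedAddCommGroup E]
    [InnerProductSpace ℝ E] {x y : E} (h : ‖x‖ = ‖y‖) : ∃ A : E ≃ₗᵢ[ℝ] E, A x = y :=
  ⟨(ℝ ∙ (x - y))ᗮ.reflection, Submodule.reflection_sub h⟩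

theorem sum_sum_mul_integral_nonneg {α ι : Type*} [MeasurableSpace α] [Fintype ι] {μ : Measure α}
    {k : ι → ι → α → ℝ} (hk : ∀ i j, Integrable (k i j) μ) {c : ι → ℝ}
    (hc : ∀ᵐ a ∂μ, 0 ≤ ∑ i, ∑ j, c i * c j * k i j a) :
    0 ≤ ∑ i, ∑ j, c i * c j * ∫ a, k i j a ∂μ := by
  have hint (i j : ι) : Integrable (fun a ↦ c i * c j * k i j a) μ := (hk i j).const_mul _
  calc
    0 ≤ ∫ a, ∑ i, ∑ j, c i * c j * k i j a ∂μ := integral_nonneg_of_ae hc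
    _ = ∑ i, ∑ j, ∫ a, c i * c j * k i j a ∂μ := by
      rw [integral_finsetSum _ fun i _ ↦ integrable_finsetSum _ fun j _ ↦ hint i j]
      exact Finset.sum_congr rfl fun i _ ↦ integral_finsetSum _ fun j _ ↦ hint i j
    _ = ∑ i, ∑ j, c i * c j * ∫ a, k i j a ∂μ := by simp only [integral_const_mul]

section RandomFrame

variable {α E ι : Type*} [MeasurableSpace α] [NormedAddCommGroup E] [InnerProductSpace ℝ E]
  [FiniteDimensional ℝ E] [MeasurableSpace E] [BorelSpace E] {z : α → ι → E}

theorem measurableSet_mem_span_range [Finite ι] (hz : ∀ a, Orthonormal ℝ (z a))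
    (hzm : Measurable z) :
    MeasurableSet {p : α × E | p.2 ∈ span ℝ (Set.range (z p.1))} := by
  cases nonempty_fintype ι
  simp only [mem_span_range_iff_sum_inner_smul_eq (hz _)]
  have hzi (i : ι) : Measurable fun p : α × E ↦ z p.1 i :=
    (measurable_pi_apply i).comp (hzm.comp measurable_fst)
  exact measurableSet_eq_fun
    (Finset.measurable_sum _ fun i _ ↦ ((hzi i).inner measurable_snd).smul (hzi i)) measurable_snd

theorem ae_ae_notMem_span_range [Fintype ι] (hz : ∀ a, Orthonormal ℝ (z a)) (hzm : Measurable z)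
    (hι : Fintype.card ι < finrank ℝ E) (ν : Measure α) [SFinite ν]
    (μ : Measure E) [μ.IsAddHaarMeasure] :
    ∀ᵐ x ∂μ, ∀ᵐ a ∂ν, x ∉ span ℝ (Set.range (z a)) := by
  rw [← Measure.ae_ae_comm (measurableSet_mem_span_range hz hzm).compl]
  refine .of_forall fun a ↦ measure_eq_zero_iff_ae_notMem.1 (μ.addHaar_submodule _ fun htop ↦ ?_)
  exact hι.ne (by rw [← finrank_span_eq_card (hz a).linearIndependent, htop, finrank_top])

end RandomFrame

theorem PosSemidefOnSphere.sum_nonneg_s5 {W : Type*} [NormedAddCommGroup W] [InnerProductSpace ℝ W]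
    [FiniteDimensional ℝ W] {g : ℝ → ℝ} (hg : PosSemidefOnSphere (finrank ℝ W) g) {N : ℕ}
    (w : Fin N → W) (hw : ∀ i, ‖w i‖ = 1) (c : Fin N → ℝ) :
    0 ≤ ∑ i, ∑ j, c i * c j * g ⟪w i, w j⟫ := by
  let b := stdOrthonormalBasis ℝ W
  simpa only [LinearIsometryEquiv.inner_map_map] using
    hg N (fun i ↦ b.repr (w i)) c fun i ↦ (b.repr.norm_map _).trans (hw i)

section Frame

variable {n m : ℕ}

local notation "𝔼" => EuclideanSpace ℝ (Fin n)

theorem projC_eq_normalize {z : Fin m → 𝔼} (hz : Orthonormal ℝ z) (x : 𝔼) :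
    projC z x = NormedSpace.normalize ((span ℝ (Set.range z))ᗮ.starProjection x) := by
  simp only [projC, NormedSpace.normalize, Submodule.starProjection_orthogonal_val,
    starProjection_span_range_apply hz, real_inner_comm]

theorem projC_mem_orthogonal {z : Fin m → 𝔼} (hz : Orthonormal ℝ z) (x : 𝔼) :
    projC z x ∈ (span ℝ (Set.range z))ᗮ := by
  rw [projC_eq_normalize hz]
  exact Submodule.smul_mem _ _ (Submodule.starProjection_apply_mem _ x)

theorem norm_projC {z : Fin m → 𝔼} (hz : Orthonormal ℝ z) {x : 𝔼}
    (hx : x ∉ span ℝ (Set.range z)) : ‖projC z x‖ = 1 := by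
  rwa [projC_eq_normalize hz, NormedSpace.norm_normalize_eq_one_iff, ne_eq,
    Submodule.starProjection_apply_eq_zero_iff, Submodule.orthogonal_orthogonal]

theorem PosSemidefOnSphere.sum_hfun_nonneg {g : ℝ → ℝ} (hg : PosSemidefOnSphere (n - m) g)
    (F : (Fin m → ℝ) → ℝ) {z : Fin m → 𝔼} (hz : Orthonormal ℝ z) {N : ℕ} {x : Fin N → 𝔼}
    (hx : ∀ i, x i ∉ span ℝ (Set.range z)) (c : Fin N → ℝ) :
    0 ≤ ∑ i, ∑ j, c i * c j * hfun F g (x i) (x j) z := by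
  have hdim : finrank ℝ (span ℝ (Set.range z))ᗮ = n - m := by
    simpa using finrank_orthogonal_span_range hz.linearIndependent
  let w (i : Fin N) : (span ℝ (Set.range z))ᗮ := ⟨projC z (x i), projC_mem_orthogonal hz (x i)⟩
  calc
    0 ≤ ∑ i, ∑ j, c i * F (fun k ↦ ⟪x i, z k⟫) * (c j * F fun k ↦ ⟪x j, z k⟫) * g ⟪w i, w j⟫ :=
      (hdim ▸ hg).sum_nonneg_s5 w (fun i ↦ norm_projC hz (hx i)) _
    _ = ∑ i, ∑ j, c i * c j * hfun F g (x i) (x j) z := by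
      refine Finset.sum_congr rfl fun i _ ↦ Finset.sum_congr rfl fun j _ ↦ ?_
      rw [Submodule.coe_inner, hfun]
      ring

theorem apply_mem_span_frameMap_iff (A : 𝔼 ≃ₗᵢ[ℝ] 𝔼) (z : Stiefel n m) (x : 𝔼) :
    A x ∈ span ℝ (Set.range (frameMap A z).1) ↔ x ∈ span ℝ (Set.range z.1) := by
  have hspan : span ℝ (Set.range (frameMap A z).1) =
      (span ℝ (Set.range z.1)).map (A.toLinearEquiv : 𝔼 →ₗ[ℝ] 𝔼) := by
    rw [Submodule.map_span, ← Set.range_comp]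
    rfl
  rw [hspan]
  exact A.injective.mem_set_image

theorem measurable_frameMap (A : 𝔼 ≃ₗᵢ[ℝ] 𝔼) : Measurable (frameMap (m := m) A) :=
  Measurable.subtype_mk <| measurable_pi_lambda _ fun i ↦
    A.continuous.measurable.comp ((measurable_pi_apply i).comp measurable_subtype_coe)

theorem IsInvProb.measurePreserving_frameMap {ν : Measure (Stiefel n m)} (hν : IsInvProb ν)
    (A : 𝔼 ≃ₗᵢ[ℝ] 𝔼) : MeasurePreserving (frameMap A) ν ν :=
  ⟨measurable_frameMap A, hν.2 A⟩

theorem IsInvProb.ae_notMem_span {ν : Measure (Stiefel n m)} (hν : IsInvProb ν) (hmn : m < n)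
    {y : 𝔼} (hy : y ≠ 0) : ∀ᵐ z ∂ν, y ∉ span ℝ (Set.range z.1) := by
  have := hν.1
  have : Nontrivial 𝔼 := ⟨y, 0, hy⟩
  have hae : ∀ᵐ x : 𝔼, ∀ᵐ z ∂ν, x ∉ span ℝ (Set.range z.1) :=
    ae_ae_notMem_span_range (z := fun z : Stiefel n m ↦ z.1) (fun z ↦ z.2)
      measurable_subtype_coe (by simpa) ν volume
  obtain ⟨x, hx, hx₀⟩ := (hae.and (Measure.ae_ne volume 0)).exists
  have hr : ‖y‖ / ‖x‖ ≠ 0 := div_ne_zero (norm_ne_zero_iff.2 hy) (norm_ne_zero_iff.2 hx₀)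
  obtain ⟨A, hA⟩ : ∃ A : 𝔼 ≃ₗᵢ[ℝ] 𝔼, A y = (‖y‖ / ‖x‖) • x :=
    exists_linearIsometryEquiv_apply_eq (by simp [norm_smul, hx₀])
  filter_upwards [(hν.measurePreserving_frameMap A).quasiMeasurePreserving.ae hx] with z hz
  rwa [← apply_mem_span_frameMap_iff A, hA, Submodule.smul_mem_iff _ hr]

end Frame

theorem stiefel_average_pos_semidef_general {n m : ℕ} (hmn : m < n)
    (F : (Fin m → ℝ) → ℝ) {g : ℝ → ℝ} (hg : PosSemidefOnSphere (n - m) g) :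
    (∀ (z : Stiefel n m) (N : ℕ) (x : Fin N → EuclideanSpace ℝ (Fin n)) (c : Fin N → ℝ),
        (∀ i, x i ∉ Submodule.span ℝ (Set.range z.1)) →
        0 ≤ ∑ i, ∑ j, c i * c j * hfun F g (x i) (x j) z.1) ∧
    (∀ ν : Measure (Stiefel n m), IsInvProb ν →
      ∀ (N : ℕ) (x : Fin N → EuclideanSpace ℝ (Fin n)) (c : Fin N → ℝ),
        (∀ i, x i ≠ 0) →
        (∀ i j, Integrable (fun z : Stiefel n m ↦ hfun F g (x i) (x j) z.1) ν) →
        0 ≤ ∑ i, ∑ j, c i * c j * Hfun ν F g (x i) (x j)) := by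
  refine ⟨fun z N x c hx ↦ hg.sum_hfun_nonneg F z.2 hx c, fun ν hν N x c hx hint ↦ ?_⟩
  have hspan : ∀ᵐ z ∂ν, ∀ i, x i ∉ span ℝ (Set.range z.1) :=
    ae_all_iff.2 fun i ↦ hν.ae_notMem_span hmn (hx i)
  exact sum_sum_mul_integral_nonneg hint (hspan.mono fun z hz ↦ hg.sum_hfun_nonneg F z.2 hz c)

/-- Positive semi-definiteness of `h` and of the Stiefel average `H`. -/
theorem stiefel_average_pos_semidef
    (n m : ℕ) (hm : 1 ≤ m) (hmn : m ≤ n - 2) (hn : 2 ≤ n)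
    (F : (Fin m → ℝ) → ℝ) (hF : Measurable F) (g : ℝ → ℝ) (hg : Measurable g)
    (hgpsd : PosSemidefOnSphere (n - m) g) :
    (∀ (z : Stiefel n m) (N : ℕ) (x : Fin N → EuclideanSpace ℝ (Fin n)) (c : Fin N → ℝ),
        (∀ i, ‖x i‖ = 1) →
        (∀ i, x i ∉ Submodule.span ℝ (Set.range z.1)) →
        0 ≤ ∑ i, ∑ j, c i * c j * hfun F g (x i) (x j) z.1) ∧
    (∀ ν : Measure (Stiefel n m), IsInvProb ν →
      (∀ x y : EuclideanSpace ℝ (Fin n), ‖x‖ = 1 → ‖y‖ = 1 →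
          Integrable (fun z : Stiefel n m => hfun F g x y z.1) ν) →
      ∀ (N : ℕ) (x : Fin N → EuclideanSpace ℝ (Fin n)) (c : Fin N → ℝ),
        (∀ i, ‖x i‖ = 1) →
        0 ≤ ∑ i, ∑ j, c i * c j * Hfun ν F g (x i) (x j)) := by
  have general := stiefel_average_pos_semidef_general (by omega) F hgpsd
  exact ⟨fun z N x c _ ↦ general.1 z N x c, fun ν hν hint N x c hx ↦ general.2 ν hν N x c
    (fun i ↦ ne_zero_of_norm_ne_zero (by simp [hx i])) fun i j ↦ hint _ _ (hx i) (hx j)⟩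
end
end
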